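/- arXiv:1406.0373 — 2 statements merged into one kernel-verified Lean document; each statement's English description precedes it below -/
import Mathlib

section
/- Fix an integer k ≥ 2, a constant μ > 1/(k(k−1)), and u ∈ ω(1) ∩ o(n). Then there exist α ∈ (0,1) and c > 0 such that, for the random bipartite graph ensemble with n variables and m = ⌈μn⌉ constraints, the probability that there exists a k-stopping set of size at least αn contained in {u(n)+1,…,n} is at most exp(−c·u(n)) for all sufficiently large n. -/
open Filter Finset Asymptotics

noncomputable section

/-- Neighborhood `∂(a)` of constraint `a` in the bipartite graph given by `ω`. -/
def nbhd {n m k : ℕ} (ω : Fin m → (Fin k ↪ Fin n)) (a : Fin m) : Finset (Fin n) :=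
  Finset.univ.image (ω a)

/-- `V` is a `d`-stopping set: every constraint meets `V` in `0` or at least `d` variables. -/
def IsStoppingSet {n m k : ℕ} (d : ℕ) (ω : Fin m → (Fin k ↪ Fin n))
    (V : Finset (Fin n)) : Prop :=
  ∀ a : Fin m, (nbhd ω a ∩ V).card = 0 ∨ d ≤ (nbhd ω a ∩ V).card

/-- Probability of an event under the uniform random bipartite-graph ensemble:
each of the `m` constraints independently picks a uniformly random `k`-tuple of
distinct indices from `{1,…,n}` (an embedding `Fin k ↪ Fin n`). -/
def prG (n m k : ℕ) (P : (Fin m → (Fin k ↪ Fin n)) → Prop) : ℝ :=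
  letI := Classical.decPred P
  ((Finset.univ.filter P).card : ℝ) / (Fintype.card (Fin m → (Fin k ↪ Fin n)) : ℝ)

/-- `u ∈ ω(1) ∩ o(n)`. -/
def UGood (u : ℕ → ℕ) : Prop :=
  Tendsto (fun n => (u n : ℝ)) atTop atTop ∧
    Tendsto (fun n => (u n : ℝ) / (n : ℝ)) atTop (nhds 0)

/-- `μ_c(k,r) = binom(k,r)⁻¹ (r-2)^(r-2) / (r (r-1)^(r-1))`. -/
def muc (k r : ℕ) : ℝ :=
  ((k.choose r : ℝ))⁻¹ * (((r : ℝ) - 2) ^ (r - 2) / ((r : ℝ) * ((r : ℝ) - 1) ^ (r - 1)))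

/-- `φ_{k,r}(μ,λ,τ) = μ (e^{(k-r+1)λ} - 1) binom(k,r-1) (1+τ)^{r-1} - λτ`. -/
def phiE (k r : ℕ) (μ lam τ : ℝ) : ℝ :=
  μ * (Real.exp (((k : ℝ) - (r : ℝ) + 1) * lam) - 1) * (k.choose (r - 1) : ℝ)
      * (1 + τ) ^ (r - 1)
    - lam * τ

/-- Membership in the local marginal polytope LOCAL: each `B a` is a distribution on
`[q]^k`, each `b i` is a distribution on `[q]`, and the marginalization conditions hold. -/
def MemLOCAL {n m q k : ℕ} (nb : Fin m → (Fin k ↪ Fin n))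
    (b : Fin n → Fin q → ℝ) (B : Fin m → (Fin k → Fin q) → ℝ) : Prop :=
  (∀ i x, 0 ≤ b i x) ∧ (∀ i, ∑ x, b i x = 1) ∧
  (∀ a z, 0 ≤ B a z) ∧ (∀ a, ∑ z, B a z = 1) ∧
  (∀ (a : Fin m) (j : Fin k) (x : Fin q),
    b (nb a j) x = ∑ z : Fin k → Fin q, if z j = x then B a z else 0)

/-- A point of LOCAL is zero-optimal if each `B a` is supported on `f_a⁻¹(y_a)`. -/
def ZeroOptimal {m q k l : ℕ} (f : Fin m → (Fin k → Fin q) → (Fin l → Fin q))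
    (y : Fin m → Fin l → Fin q) (B : Fin m → (Fin k → Fin q) → ℝ) : Prop :=
  ∀ a z, B a z ≠ 0 → f a z = y a

/-- Integral part of a point of LOCAL. -/
def integralPart {n q : ℕ} (b : Fin n → Fin q → ℝ) : Finset (Fin n) :=
  letI := Classical.decPred fun i : Fin n => ∃ x : Fin q, b i x = 1
  Finset.univ.filter fun i : Fin n => ∃ x : Fin q, b i x = 1

/-- `f : [q]^k → [q]^l` is `w`-wise independent. -/
def WiseIndep (q k l w : ℕ) (f : (Fin k → Fin q) → (Fin l → Fin q)) : Prop :=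
  ∀ T : Finset (Fin k), T.card ≤ w → ∀ xT : Fin k → Fin q, ∀ y : Fin l → Fin q,
    (Finset.univ.filter fun x : Fin k → Fin q =>
        (∀ i ∈ T, x i = xT i) ∧ f x = y).card
      = q ^ (k - T.card - l)

/-- Minimum Hamming distance of a code. -/
def minHammingDist {A : Type*} [DecidableEq A] {k : ℕ} (M : Finset (Fin k → A)) : ℕ :=
  sInf {d | ∃ x ∈ M, ∃ y ∈ M, x ≠ y ∧ hammingDist x y = d}

/-- `M` is an MDS code of length `k` and dimension `r-1`. -/
def IsMDSCode (A : Type*) [Fintype A] [DecidableEq A] (k r : ℕ)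
    (M : Finset (Fin k → A)) : Prop :=
  M.card = Fintype.card A ^ (r - 1) ∧ minHammingDist M = k - r + 2

/-- `f` has MDS inverse image of dimension `r-1`. -/
def HasMDSInv (q k r : ℕ) (f : (Fin k → Fin q) → (Fin (k - r + 1) → Fin q)) : Prop :=
  ∀ y : Fin (k - r + 1) → Fin q,
    IsMDSCode (Fin q) k r (Finset.univ.filter fun x => f x = y)

instance {n m k : ℕ} (d : ℕ) (ω : Fin m → (Fin k ↪ Fin n)) :
    DecidablePred fun V : Finset (Fin n) => IsStoppingSet d ω V := fun V => by
  unfold IsStoppingSet; infer_instance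
open Classical in
/-- closed set for a partial configuration -/
def Clo {n m k : ℕ} (ω : Fin m → Option (Fin k ↪ Fin n)) (U : Finset (Fin n)) : Prop :=
  ∀ a e, ω a = some e → (∀ i, e i ∈ U) ∨ (∀ i, e i ∉ U)

open Classical in
/-- closure of `B` -/
def cls {n m k : ℕ} (B : Finset (Fin n)) (ω : Fin m → Option (Fin k ↪ Fin n)) : Finset (Fin n) :=
  Finset.univ.filter (fun i => ∀ U : Finset (Fin n), B ⊆ U → Clo ω U → i ∈ U)

open Classical in
/-- erase slots outside of the closure -/
def ers {n m k : ℕ} (B : Finset (Fin n)) (ω : Fin m → Option (Fin k ↪ Fin n)) :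
    Fin m → Option (Fin k ↪ Fin n) :=
  fun a => if (∃ e, ω a = some e ∧ ∀ i, e i ∈ cls B ω) then ω a else none

lemma sub_cls {n m k : ℕ} (B : Finset (Fin n)) (ω : Fin m → Option (Fin k ↪ Fin n)) :
    B ⊆ cls B ω := by
  intro i hi
  simp only [cls, mem_filter, mem_univ, true_and]
  intro U hU _
  exact hU hi

lemma cls_sub {n m k : ℕ} {B : Finset (Fin n)} {ω : Fin m → Option (Fin k ↪ Fin n)}
    {U : Finset (Fin n)} (h1 : B ⊆ U) (h2 : Clo ω U) : cls B ω ⊆ U := by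
  intro i hi
  simp only [cls, mem_filter, mem_univ, true_and] at hi
  exact hi U h1 h2

lemma clo_cls {n m k : ℕ} (B : Finset (Fin n)) (ω : Fin m → Option (Fin k ↪ Fin n)) :
    Clo ω (cls B ω) := by
  intro a e hae
  by_cases h : ∃ U : Finset (Fin n), B ⊆ U ∧ Clo ω U ∧ ∀ i, e i ∉ U
  · obtain ⟨U, h1, h2, h3⟩ := h
    right
    intro i hi
    exact h3 i (cls_sub h1 h2 hi)
  · push Not at h
    left
    intro i
    simp only [cls, mem_filter, mem_univ, true_and]
    intro U hU hc
    rcases hc a e hae with h4 | h4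
    · exact h4 i
    · obtain ⟨i', hi'⟩ := h U hU hc
      exact absurd hi' (h4 i')

lemma ers_eq {n m k : ℕ} (hk : 0 < k) (B : Finset (Fin n))
    (ω₀ ω : Fin m → Option (Fin k ↪ Fin n))
    (h1 : ∀ a e, ers B ω₀ a = some e → ω a = some e)
    (h2 : ∀ a e, ers B ω₀ a = none → ω a = some e → ∀ i, e i ∉ cls B ω₀) :
    ers B ω = ers B ω₀ := by
  have hin : ∀ a e, ers B ω₀ a = some e → ∀ i, e i ∈ cls B ω₀ := by
    intro a e h
    unfold ers at h
    split_ifs at h with h'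
    obtain ⟨e', he', h3⟩ := h'
    rw [he'] at h
    cases h
    exact h3
  have hcl : cls B ω = cls B ω₀ := by
    have hsub : cls B ω ⊆ cls B ω₀ := by
      apply cls_sub (sub_cls _ _)
      intro a e hae
      rcases hx : ers B ω₀ a with _ | e'
      · exact Or.inr (h2 a e hx hae)
      · have := h1 a e' hx
        rw [hae] at this
        cases this
        exact Or.inl (hin a e hx)
    apply Finset.Subset.antisymm hsub
    apply cls_sub (sub_cls _ _)
    intro a e hae
    rcases clo_cls B ω₀ a e hae with h | h
    · have : ers B ω₀ a = some e := by
        unfold ers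
        rw [if_pos ⟨e, hae, h⟩, hae]
      exact clo_cls B ω a e (h1 a e this)
    · right
      intro i hi
      exact h i (hsub hi)
  funext a
  rcases hx : ers B ω₀ a with _ | e
  · unfold ers
    rw [if_neg]
    rintro ⟨e, he, h3⟩
    rw [hcl] at h3
    exact h2 a e hx he ⟨0, hk⟩ (h3 _)
  · unfold ers
    rw [if_pos ⟨e, h1 a e hx, by rw [hcl]; exact hin a e hx⟩, h1 a e hx]

open Classical in
/-- number of edges inside a set -/
lemma card_ins {n k : ℕ} (W : Finset (Fin n)) :
    (Finset.univ.filter (fun e : Fin k ↪ Fin n => ∀ i, e i ∈ W)).card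
      = W.card.descFactorial k := by
  have : Fintype.card {e : Fin k ↪ Fin n // ∀ i, e i ∈ W} = W.card.descFactorial k := by
    have h := Fintype.card_congr (Equiv.codRestrict (Fin k) (↑W : Set (Fin n)))
    simp only [Finset.mem_coe] at h
    rw [h]
    simp [Fintype.card_embedding_eq]
  rw [← this, Fintype.card_subtype]

lemma desc_le (w n k : ℕ) (h : w ≤ n) :
    n ^ k * w.descFactorial k ≤ w ^ k * n.descFactorial k := by
  induction k with
  | zero => simp
  | succ k ih =>
    rw [Nat.descFactorial_succ, Nat.descFactorial_succ, pow_succ, pow_succ]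
    have h2 : n * (w - k) ≤ w * (n - k) := by
      rw [Nat.mul_sub, Nat.mul_sub]
      have : w * k ≤ n * k := Nat.mul_le_mul_right _ h
      have e : n * w = w * n := Nat.mul_comm _ _
      omega
    calc n ^ k * n * ((w - k) * w.descFactorial k)
        = (n * (w - k)) * (n ^ k * w.descFactorial k) := by ring
      _ ≤ (w * (n - k)) * (w ^ k * n.descFactorial k) := Nat.mul_le_mul h2 ih
      _ = _ := by ring

open Classical in
lemma ins_ratio {n k : ℕ} (hn : 0 < n) (W : Finset (Fin n)) :
    ((Finset.univ.filter (fun e : Fin k ↪ Fin n => ∀ i, e i ∈ W)).card : ℝ)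
      ≤ ((W.card : ℝ) / n) ^ k * (Fintype.card (Fin k ↪ Fin n) : ℝ) := by
  rw [card_ins, Fintype.card_embedding_eq, Fintype.card_fin, Fintype.card_fin]
  have h := desc_le W.card n k (by simpa using Finset.card_le_univ W)
  have h' : ((n : ℝ)) ^ k * (W.card.descFactorial k : ℝ)
    ≤ (W.card : ℝ) ^ k * (n.descFactorial k : ℝ) := by exact_mod_cast h
  have hn' : (0 : ℝ) < (n : ℝ) ^ k := by positivity
  rw [div_pow, div_mul_eq_mul_div, le_div_iff₀ hn']
  linarith

open Classical in
lemma tilt {n m k : ℕ} (hk : 0 < k) (hN : 0 < Fintype.card (Fin k ↪ Fin n)) (B : Finset (Fin n))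
    (ρ R : ℝ) (hρ : 1 < ρ) (hR : 0 ≤ R)
    (A : Finset (Fin m → (Fin k ↪ Fin n)))
    (hA : ∀ ω ∈ A, ∀ j D : ℕ,
      j = (Finset.univ.filter (fun a => ∀ i, ω a i ∈ cls B (fun a => some (ω a)))).card →
      D = (Finset.univ.filter
        (fun e : Fin k ↪ Fin n => ∀ i, e i ∉ cls B (fun a => some (ω a)))).card →
      ((D : ℝ) / (Fintype.card (Fin k ↪ Fin n) : ℝ)) ^ (m - j) ≤ R * (ρ⁻¹ ^ j *
        (1 - ρ⁻¹ + ρ⁻¹ * ((D : ℝ) / (Fintype.card (Fin k ↪ Fin n) : ℝ))) ^ (m - j))) :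
    (A.card : ℝ) / (Fintype.card (Fin m → (Fin k ↪ Fin n)) : ℝ) ≤ R := by
  set N : ℝ := (Fintype.card (Fin k ↪ Fin n) : ℝ) with hNdef
  have hNpos : 0 < N := by rw [hNdef]; exact_mod_cast hN
  have hcardm : (Fintype.card (Fin m → (Fin k ↪ Fin n)) : ℝ) = N ^ m := by
    rw [Fintype.card_fun, Fintype.card_fin]; push_cast; rfl
  have hρ0 : 0 < ρ := by linarith
  have hρ1 : ρ⁻¹ < 1 := inv_lt_one_of_one_lt₀ hρ
  have hρi : 0 < ρ⁻¹ := inv_pos.mpr hρ0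
  set key : (Fin m → (Fin k ↪ Fin n)) → (Fin m → Option (Fin k ↪ Fin n)) :=
    fun ω => ers B (fun a => some (ω a)) with hkey
  set w : Option (Fin k ↪ Fin n) → ℝ := fun o => o.elim (1 - ρ⁻¹) (fun _ => ρ⁻¹ / N) with hw
  have hw0 : ∀ o, 0 ≤ w o := by
    intro o
    rcases o with _ | e
    · simp [hw]; linarith
    · simp [hw]; positivity
  have hwsum : ∑ o, w o = 1 := by
    rw [Fintype.sum_option]
    simp only [hw, Option.elim]
    rw [Finset.sum_const, Finset.card_univ, nsmul_eq_mul, ← hNdef]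
    field_simp
    ring
  have htot : ∑ ω' : Fin m → Option (Fin k ↪ Fin n), ∏ a, w (ω' a) = 1 := by
    rw [← Fintype.piFinset_univ, ← Finset.prod_univ_sum]
    simp [hwsum]
  -- per-fiber
  have hfib : ∀ κ ∈ A.image key,
      ((A.filter (fun ω => key ω = κ)).card : ℝ) / N ^ m ≤
        R * ∑ ω' ∈ Finset.univ.filter (fun ω' => ers B ω' = κ), ∏ a, w (ω' a) := by
    intro κ hκ
    obtain ⟨ω₀, hω₀, rfl⟩ := Finset.mem_image.mp hκ
    set U := cls B (fun a => some (ω₀ a)) with hU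
    set O := Finset.univ.filter (fun e : Fin k ↪ Fin n => ∀ i, e i ∉ U) with hO
    set J := Finset.univ.filter (fun a => ∀ i, ω₀ a i ∈ U) with hJ
    have hkeyJ : ∀ a, a ∈ J → key ω₀ a = some (ω₀ a) := by
      intro a ha
      simp only [hJ, mem_filter, mem_univ, true_and] at ha
      simp only [hkey, ers]
      rw [if_pos ⟨_, rfl, ha⟩]
    have hkeyJ' : ∀ a, a ∉ J → key ω₀ a = none := by
      intro a ha
      simp only [hJ, mem_filter, mem_univ, true_and] at ha
      simp only [hkey, ers]
      rw [if_neg]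
      rintro ⟨e, he, h⟩
      cases he
      exact ha h
    have hJc : (Finset.univ.filter (fun a => ¬ a ∈ J)).card = m - J.card := by
      rw [Finset.filter_not, Finset.card_sdiff]
      simp
    have hJ1 : (Finset.univ.filter (fun a => a ∈ J)) = J := by simp
    -- upper bound
    have hup : (A.filter (fun ω => key ω = key ω₀)).card ≤ O.card ^ (m - J.card) := by
      have hsub : A.filter (fun ω => key ω = key ω₀) ⊆
          Fintype.piFinset (fun a => if a ∈ J then {ω₀ a} else O) := by
        intro ω hω
        have hke := (Finset.mem_filter.mp hω).2
        have hcl : cls B (fun a => some (ω a)) = U := by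
          have haux : ∀ ω₁ ω₂ : Fin m → (Fin k ↪ Fin n), key ω₁ = key ω₂ →
              cls B (fun a => some (ω₁ a)) ⊆ cls B (fun a => some (ω₂ a)) := by
            intro ω₁ ω₂ h12
            have hclo : Clo (fun a => some (ω₁ a))
                (cls B (fun a => some (ω₁ a)) ∩ cls B (fun a => some (ω₂ a))) := by
              intro a e hae
              cases hae
              rcases clo_cls B (fun a => some (ω₁ a)) a _ rfl with h | h
              · have h1 : key ω₁ a = some (ω₁ a) := by
                  simp only [hkey, ers]
                  rw [if_pos ⟨_, rfl, h⟩]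
                rw [h12] at h1
                simp only [hkey, ers] at h1
                split_ifs at h1 with h2
                obtain ⟨e, he, h2⟩ := h2
                cases he
                have h3 := Option.some.inj h1
                left
                intro i
                rw [← h3]
                refine Finset.mem_inter.mpr ⟨?_, h2 i⟩
                rw [h3]; exact h i
              · right
                intro i hi
                exact h i (Finset.mem_inter.mp hi).1
            exact (cls_sub (Finset.subset_inter (sub_cls _ _) (sub_cls _ _)) hclo).trans
              Finset.inter_subset_right
          exact Finset.Subset.antisymm (haux _ _ hke) (haux _ _ hke.symm)
        rw [Fintype.mem_piFinset]
        intro a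
        by_cases ha : a ∈ J
        · rw [if_pos ha, Finset.mem_singleton]
          have h1 := hkeyJ a ha
          rw [← hke] at h1
          simp only [hkey, ers] at h1
          split_ifs at h1 with h2
          exact Option.some.inj h1
        · rw [if_neg ha]
          have h1 := hkeyJ' a ha
          rw [← hke] at h1
          simp only [hO, mem_filter, mem_univ, true_and]
          rcases clo_cls B (fun a => some (ω a)) a _ rfl with h | h
          · simp only [hkey, ers] at h1
            rw [if_pos ⟨_, rfl, h⟩] at h1
            cases h1
          · rw [hcl] at h
            exact h
      refine (Finset.card_le_card hsub).trans (le_of_eq ?_)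
      rw [Fintype.card_piFinset]
      have : ∀ a, (if a ∈ J then {ω₀ a} else O : Finset (Fin k ↪ Fin n)).card
          = if a ∈ J then 1 else O.card := by
        intro a; split_ifs <;> simp
      simp_rw [this]
      rw [Finset.prod_ite, Finset.prod_const, Finset.prod_const, hJc, one_pow, one_mul]
    -- lower bound
    have hlow : (ρ⁻¹ / N) ^ J.card * (1 - ρ⁻¹ + O.card * (ρ⁻¹ / N)) ^ (m - J.card) ≤
        ∑ ω' ∈ Finset.univ.filter (fun ω' => ers B ω' = key ω₀), ∏ a, w (ω' a) := by
      have hsub : Fintype.piFinset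
          (fun a => if a ∈ J then {some (ω₀ a)} else insert none (O.image some)) ⊆
          Finset.univ.filter (fun ω' => ers B ω' = key ω₀) := by
        intro ω' hω'
        rw [Fintype.mem_piFinset] at hω'
        simp only [mem_filter, mem_univ, true_and]
        apply ers_eq hk
        · intro a e hae
          have hae' : key ω₀ a = some e := hae
          by_cases ha : a ∈ J
          · have := hω' a
            rw [if_pos ha, Finset.mem_singleton] at this
            rw [this, ← hae', hkeyJ a ha]
          · rw [hkeyJ' a ha] at hae'
            cases hae'
        · intro a e hae hωa
          have hae' : key ω₀ a = none := hae
          by_cases ha : a ∈ J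
          · rw [hkeyJ a ha] at hae'
            cases hae'
          · have := hω' a
            rw [if_neg ha, hωa] at this
            simpa [hO] using this
      refine le_trans (le_of_eq ?_) (Finset.sum_le_sum_of_subset_of_nonneg hsub
        (fun _ _ _ => Finset.prod_nonneg (fun _ _ => hw0 _)))
      rw [← Finset.prod_univ_sum]
      have : ∀ a, ∑ o ∈ (if a ∈ J then {some (ω₀ a)} else insert none (O.image some) :
          Finset (Option (Fin k ↪ Fin n))), w o
          = if a ∈ J then ρ⁻¹ / N else (1 - ρ⁻¹ + O.card * (ρ⁻¹ / N)) := by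
        intro a
        split_ifs
        · simp [hw]
        · rw [Finset.sum_insert (by simp), Finset.sum_image (by simp)]
          simp [hw]
      simp_rw [this]
      rw [Finset.prod_ite, Finset.prod_const, Finset.prod_const, hJc, hJ1]
    have hmain := hA ω₀ hω₀ J.card O.card rfl rfl
    have hJm : J.card ≤ m := by simpa using Finset.card_le_univ J
    have hNm : N ^ m = N ^ J.card * N ^ (m - J.card) := by
      rw [← pow_add]; congr 1; omega
    calc ((A.filter (fun ω => key ω = key ω₀)).card : ℝ) / N ^ m
        ≤ (O.card : ℝ) ^ (m - J.card) / N ^ m := by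
          gcongr
          exact_mod_cast hup
      _ = N⁻¹ ^ J.card * ((O.card : ℝ) / N) ^ (m - J.card) := by
          rw [hNm, div_pow, inv_pow]; field_simp
      _ ≤ N⁻¹ ^ J.card * (R * (ρ⁻¹ ^ J.card *
        (1 - ρ⁻¹ + ρ⁻¹ * ((O.card : ℝ) / N)) ^ (m - J.card))) := by
          gcongr
      _ = R * ((ρ⁻¹ / N) ^ J.card * (1 - ρ⁻¹ + O.card * (ρ⁻¹ / N)) ^ (m - J.card)) := by
          rw [div_eq_mul_inv ρ⁻¹ N, mul_pow]
          have : ρ⁻¹ * ((O.card : ℝ) / N) = O.card * (ρ⁻¹ * N⁻¹) := by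
            rw [div_eq_mul_inv]; ring
          rw [this]; ring
      _ ≤ _ := by gcongr
  rw [hcardm]
  calc (A.card : ℝ) / N ^ m
      = ∑ κ ∈ A.image key, ((A.filter (fun ω => key ω = κ)).card : ℝ) / N ^ m := by
        rw [← Finset.sum_div, Finset.card_eq_sum_card_image key A]
        push_cast; rfl
    _ ≤ ∑ κ ∈ A.image key, R * ∑ ω' ∈ Finset.univ.filter (fun ω' => ers B ω' = κ),
          ∏ a, w (ω' a) := Finset.sum_le_sum hfib
    _ ≤ ∑ κ, R * ∑ ω' ∈ Finset.univ.filter (fun ω' => ers B ω' = κ), ∏ a, w (ω' a) := by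
        apply Finset.sum_le_sum_of_subset_of_nonneg (Finset.subset_univ _)
        intro _ _ _
        exact mul_nonneg hR (Finset.sum_nonneg
          (fun _ _ => Finset.prod_nonneg (fun _ _ => hw0 _)))
    _ = R * 1 := by
        rw [← Finset.mul_sum, Finset.sum_fiberwise, htot]
    _ = R := mul_one R

/-- numeric estimate for the tilted part -/
lemma num1 (k n m j s : ℕ) (μ ρ θ ε c r : ℝ) (hn : 0 < n)
    (hρ : 1 < ρ) (hθ : 0 < θ) (hε : 0 < ε) (hεμ : θ * ε ≤ μ)
    (hc : θ * Real.log ρ + c ≤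
      (μ - θ * ε) * (k * (1 - ρ⁻¹)) / (1 + k * (1 - ρ⁻¹) * ε))
    (hs : (s : ℝ) ≤ ε * n) (hj : (j : ℝ) ≤ θ * s) (hjm : j ≤ m) (hm : μ * n ≤ m)
    (hr0 : 0 ≤ r) (hsn : s ≤ n) (hr : r ≤ (((n - s : ℕ) : ℝ) / n) ^ k) :
    r ^ (m - j) ≤ Real.exp (-c * s) * (ρ⁻¹ ^ j * (1 - ρ⁻¹ + ρ⁻¹ * r) ^ (m - j)) := by
  have hn' : (0 : ℝ) < n := by exact_mod_cast hn
  have hρ0 : 0 < ρ := by linarith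
  have hρ1 : ρ⁻¹ < 1 := inv_lt_one_of_one_lt₀ hρ
  have hρi : 0 < ρ⁻¹ := inv_pos.mpr hρ0
  set g : ℝ := k * (1 - ρ⁻¹) with hg
  have hg0 : 0 ≤ g := by rw [hg]; apply mul_nonneg (by positivity); linarith
  set σ : ℝ := (s : ℝ) / n with hσ
  have hσ0 : 0 ≤ σ := by positivity
  have hσε : σ ≤ ε := by rw [hσ, div_le_iff₀ hn']; exact hs
  have hσn : σ * n = s := by rw [hσ]; field_simp
  have hrexp : r * (1 + k * σ) ≤ 1 := by
    have h1 : ((n - s : ℕ) : ℝ) / n = 1 - σ := by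
      rw [Nat.cast_sub hsn, hσ]; field_simp
    rw [h1] at hr
    have h2 : (1 - σ) ≤ Real.exp (-σ) := by
      have := Real.add_one_le_exp (-σ); linarith
    have h3 : 0 ≤ 1 - σ := by rw [← h1]; positivity
    have h4 : r ≤ Real.exp (-(k * σ)) := by
      calc r ≤ (1 - σ) ^ k := hr
        _ ≤ (Real.exp (-σ)) ^ k := by gcongr
        _ = Real.exp (-(k * σ)) := by rw [← Real.exp_nat_mul]; congr 1; ring
    have h5 : 1 + k * σ ≤ Real.exp (k * σ) := by
      have := Real.add_one_le_exp (k * σ); linarith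
    calc r * (1 + k * σ) ≤ Real.exp (-(k * σ)) * Real.exp (k * σ) := by gcongr
      _ = 1 := by rw [← Real.exp_add]; simp
  have hstep : r * (1 + g * σ) ≤ 1 - ρ⁻¹ + ρ⁻¹ * r := by
    have : r * (1 + g * σ) = ρ⁻¹ * r + (1 - ρ⁻¹) * (r * (1 + k * σ)) := by
      rw [hg]; ring
    rw [this]
    nlinarith
  have ht0 : 0 < 1 + g * σ := by positivity
  have hkey : ρ ^ j ≤ Real.exp (-c * s) * (1 + g * σ) ^ (m - j) := by
    have h1 : ρ ^ j = Real.exp (j * Real.log ρ) := by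
      rw [Real.exp_nat_mul, Real.exp_log hρ0]
    have h2 : (1 + g * σ) ^ (m - j) = Real.exp ((m - j : ℕ) * Real.log (1 + g * σ)) := by
      rw [Real.exp_nat_mul, Real.exp_log ht0]
    rw [h1, h2, ← Real.exp_add]
    apply Real.exp_le_exp.mpr
    have hlog : g * σ / (1 + g * ε) ≤ Real.log (1 + g * σ) := by
      have h3 := Real.one_sub_inv_le_log_of_pos ht0
      have h4 : 1 - (1 + g * σ)⁻¹ = g * σ / (1 + g * σ) := by field_simp; ring
      rw [h4] at h3
      refine le_trans ?_ h3
      gcongr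
    have hmj : (μ - θ * ε) * n ≤ ((m - j : ℕ) : ℝ) := by
      rw [Nat.cast_sub hjm]
      nlinarith
    have hlρ : 0 < Real.log ρ := Real.log_pos hρ
    have h6 : (μ - θ * ε) * n * (g * σ / (1 + g * ε)) ≤
        ((m - j : ℕ) : ℝ) * Real.log (1 + g * σ) := by
      apply mul_le_mul hmj hlog (by positivity) (by positivity)
    have h7 : (μ - θ * ε) * n * (g * σ / (1 + g * ε)) =
        (μ - θ * ε) * g / (1 + g * ε) * s := by
      rw [← hσn]; ring
    rw [h7] at h6
    have h8 : (θ * Real.log ρ + c) * s ≤ (μ - θ * ε) * g / (1 + g * ε) * s := by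
      gcongr
    have h9 : (j : ℝ) * Real.log ρ ≤ θ * s * Real.log ρ := by gcongr
    nlinarith
  have hfin : r ^ (m - j) * (1 + g * σ) ^ (m - j) ≤ (1 - ρ⁻¹ + ρ⁻¹ * r) ^ (m - j) := by
    rw [← mul_pow]
    gcongr
  calc r ^ (m - j) = ρ⁻¹ ^ j * ρ ^ j * r ^ (m - j) := by
        rw [← mul_pow, inv_mul_cancel₀ hρ0.ne', one_pow, one_mul]
    _ ≤ ρ⁻¹ ^ j * (Real.exp (-c * s) * (1 + g * σ) ^ (m - j)) * r ^ (m - j) := by gcongr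
    _ = Real.exp (-c * s) * (ρ⁻¹ ^ j * (r ^ (m - j) * (1 + g * σ) ^ (m - j))) := by ring
    _ ≤ _ := by gcongr

open Classical in
/-- Many edges inside a fixed set. -/
lemma many_one {n m k : ℕ} (hn : 0 < n) (U : Finset (Fin n)) (z t : ℝ) (hz : 0 ≤ z) :
    ((Finset.univ.filter (fun ω : Fin m → (Fin k ↪ Fin n) =>
      t ≤ ((Finset.univ.filter (fun a => ∀ i, ω a i ∈ U)).card : ℝ))).card : ℝ) ≤
    Real.exp (-z * t) * Real.exp (m * (Real.exp z * ((U.card : ℝ) / n) ^ k)) *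
      (Fintype.card (Fin m → (Fin k ↪ Fin n)) : ℝ) := by
  set N : ℝ := (Fintype.card (Fin k ↪ Fin n) : ℝ) with hNdef
  have hN0 : 0 ≤ N := by rw [hNdef]; positivity
  have hcardm : (Fintype.card (Fin m → (Fin k ↪ Fin n)) : ℝ) = N ^ m := by
    rw [Fintype.card_fun, Fintype.card_fin]; push_cast; rfl
  set f : (Fin k ↪ Fin n) → ℝ := fun e => if ∀ i, e i ∈ U then Real.exp z else 1 with hf
  have hf0 : ∀ e, 0 ≤ f e := by
    intro e; simp only [hf]; split_ifs <;> positivity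
  have hprod : ∀ ω : Fin m → (Fin k ↪ Fin n), ∏ a, f (ω a) =
      Real.exp (z * (Finset.univ.filter (fun a => ∀ i, ω a i ∈ U)).card) := by
    intro ω
    simp only [hf]
    rw [Finset.prod_ite, Finset.prod_const, Finset.prod_const, one_pow, mul_one,
      ← Real.exp_nat_mul]
    congr 1; ring
  have hsum : ∑ e, f e ≤ N * (1 + Real.exp z * ((U.card : ℝ) / n) ^ k) := by
    have h1 : ∀ e, f e ≤ 1 + Real.exp z * (if ∀ i, e i ∈ U then 1 else 0) := by
      intro e
      simp only [hf]
      split_ifs <;> simp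
    calc ∑ e, f e ≤ ∑ e : Fin k ↪ Fin n, (1 + Real.exp z * (if ∀ i, e i ∈ U then 1 else 0)) :=
          Finset.sum_le_sum (fun e _ => h1 e)
      _ = N + Real.exp z *
          ((Finset.univ.filter (fun e : Fin k ↪ Fin n => ∀ i, e i ∈ U)).card : ℝ) := by
          rw [Finset.sum_add_distrib, ← Finset.mul_sum, Finset.sum_boole]
          simp [hNdef]
      _ ≤ N + Real.exp z * (((U.card : ℝ) / n) ^ k * N) := by
          gcongr
          exact ins_ratio hn U
      _ = _ := by ring
  have htot : ∑ ω : Fin m → (Fin k ↪ Fin n), ∏ a, f (ω a) ≤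
      Real.exp (m * (Real.exp z * ((U.card : ℝ) / n) ^ k)) * N ^ m := by
    rw [← Fintype.piFinset_univ, ← Finset.prod_univ_sum]
    rw [Finset.prod_const, Finset.card_univ, Fintype.card_fin]
    rw [Real.exp_nat_mul, ← mul_pow]
    apply pow_le_pow_left₀ (Finset.sum_nonneg (fun e _ => hf0 e))
    refine hsum.trans ?_
    rw [mul_comm]
    gcongr
    have := Real.add_one_le_exp (Real.exp z * ((U.card : ℝ) / n) ^ k)
    linarith
  rw [hcardm]
  rw [Finset.card_filter, Nat.cast_sum]
  calc _ ≤ ∑ ω : Fin m → (Fin k ↪ Fin n), Real.exp (-z * t) * ∏ a, f (ω a) := by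
        apply Finset.sum_le_sum
        intro ω _
        rw [hprod, ← Real.exp_add]
        split_ifs with h
        · rw [Nat.cast_one]
          apply Real.one_le_exp
          nlinarith
        · rw [Nat.cast_zero]; positivity
    _ ≤ _ := by
        rw [← Finset.mul_sum, mul_assoc]
        gcongr

lemma choose_bd (n s : ℕ) (hn : 0 < n) (hs : 0 < s) :
    (n.choose s : ℝ) ≤ Real.exp s * Real.exp (s * Real.log (n / s)) := by
  have hn' : (0 : ℝ) < n := by exact_mod_cast hn
  have hs' : (0 : ℝ) < s := by exact_mod_cast hs
  rcases lt_or_ge n s with h | h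
  · rw [Nat.choose_eq_zero_of_lt h]; push_cast; positivity
  have h1 : (n.choose s : ℝ) * ((s : ℝ) / n) ^ s ≤ Real.exp s := by
    calc (n.choose s : ℝ) * ((s : ℝ) / n) ^ s
        ≤ ((s : ℝ) / n + 1) ^ n := by
          rw [add_pow]
          refine le_trans (le_of_eq ?_) (Finset.single_le_sum
            (f := fun i => ((s : ℝ) / n) ^ i * 1 ^ (n - i) * (n.choose i : ℝ))
            (fun i _ => by positivity) (Finset.mem_range.mpr (Nat.lt_succ_of_le h)))
          simp; ring
      _ ≤ (Real.exp ((s : ℝ) / n)) ^ n := by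
          gcongr
          exact Real.add_one_le_exp _
      _ = Real.exp s := by rw [← Real.exp_nat_mul]; congr 1; field_simp
  rw [Real.exp_nat_mul, Real.exp_log (by positivity)]
  have h2 : (n.choose s : ℝ) = (n.choose s : ℝ) * ((s : ℝ) / n) ^ s * ((n : ℝ) / s) ^ s := by
    rw [mul_assoc, ← mul_pow]
    have : (s : ℝ) / n * (n / s) = 1 := by field_simp
    rw [this]; simp
  rw [h2]
  gcongr

open Classical in
lemma many_all {n m k s : ℕ} (hn : 0 < n) (hs : 0 < s) (hk : 1 ≤ k) (hsn : s ≤ n)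
    (μ θ : ℝ) (hm : (m : ℝ) ≤ (μ + 1) * n)
    (hL : μ + 4 ≤ (((k : ℝ) - 1) * θ - 1) * Real.log (n / s)) :
    ((Finset.univ.filter (fun ω : Fin m → (Fin k ↪ Fin n) =>
      ∃ U : Finset (Fin n), U.card = s ∧
      θ * s ≤ ((Finset.univ.filter (fun a => ∀ i, ω a i ∈ U)).card : ℝ))).card : ℝ) ≤
    Real.exp (-2 * s) * (Fintype.card (Fin m → (Fin k ↪ Fin n)) : ℝ) := by
  have hn' : (0 : ℝ) < n := by exact_mod_cast hn
  have hs' : (0 : ℝ) < s := by exact_mod_cast hs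
  set L := Real.log ((n : ℝ) / s) with hLdef
  have hL0 : 0 ≤ L := Real.log_nonneg (by rw [le_div_iff₀ hs']; simpa using hsn)
  have hk' : (0 : ℝ) ≤ (k : ℝ) - 1 := by
    have : (1 : ℝ) ≤ k := by exact_mod_cast hk
    linarith
  set M : ℝ := (Fintype.card (Fin m → (Fin k ↪ Fin n)) : ℝ) with hM
  have hσ : (s : ℝ) / n = Real.exp (-L) := by
    rw [hLdef, Real.exp_neg, Real.exp_log (by positivity)]; simp
  have hone : ∀ U ∈ Finset.powersetCard s (Finset.univ : Finset (Fin n)),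
      ((Finset.univ.filter (fun ω : Fin m → (Fin k ↪ Fin n) =>
      θ * s ≤ ((Finset.univ.filter (fun a => ∀ i, ω a i ∈ U)).card : ℝ))).card : ℝ) ≤
      Real.exp (-(((k : ℝ) - 1) * L) * (θ * s)) * Real.exp ((μ + 1) * s) * M := by
    intro U hU
    have hUc := (Finset.mem_powersetCard.mp hU).2
    refine (many_one hn U (((k : ℝ) - 1) * L) (θ * s) (by positivity)).trans ?_
    refine mul_le_mul_of_nonneg_right (mul_le_mul_of_nonneg_left
      (Real.exp_le_exp.mpr ?_) (Real.exp_pos _).le) (Nat.cast_nonneg _)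
    rw [hUc, hσ, ← Real.exp_nat_mul, ← Real.exp_add]
    have : ((k : ℝ) - 1) * L + k * -L = -L := by ring
    rw [this, ← hσ]
    calc (m : ℝ) * (s / n) ≤ (μ + 1) * n * (s / n) := by gcongr
      _ = (μ + 1) * s := by field_simp
  have hsub : (Finset.univ.filter (fun ω : Fin m → (Fin k ↪ Fin n) =>
      ∃ U : Finset (Fin n), U.card = s ∧
      θ * s ≤ ((Finset.univ.filter (fun a => ∀ i, ω a i ∈ U)).card : ℝ))) ⊆
      (Finset.powersetCard s (Finset.univ : Finset (Fin n))).biUnion (fun U =>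
        Finset.univ.filter (fun ω : Fin m → (Fin k ↪ Fin n) =>
      θ * s ≤ ((Finset.univ.filter (fun a => ∀ i, ω a i ∈ U)).card : ℝ))) := by
    intro ω hω
    obtain ⟨U, hU, h⟩ := (Finset.mem_filter.mp hω).2
    rw [Finset.mem_biUnion]
    exact ⟨U, Finset.mem_powersetCard.mpr ⟨Finset.subset_univ _, hU⟩,
      Finset.mem_filter.mpr ⟨Finset.mem_univ _, h⟩⟩
  have hc1 := (Finset.card_le_card hsub).trans Finset.card_biUnion_le
  have hc2 : ((Finset.univ.filter (fun ω : Fin m → (Fin k ↪ Fin n) =>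
      ∃ U : Finset (Fin n), U.card = s ∧
      θ * s ≤ ((Finset.univ.filter (fun a => ∀ i, ω a i ∈ U)).card : ℝ))).card : ℝ) ≤ _ :=
    (Nat.cast_le (α := ℝ)).mpr hc1
  rw [Nat.cast_sum] at hc2
  refine hc2.trans ((Finset.sum_le_sum hone).trans ?_)
  rw [Finset.sum_const, Finset.card_powersetCard, nsmul_eq_mul, Finset.card_univ,
    Fintype.card_fin, ← mul_assoc]
  have hM0 : 0 ≤ M := by rw [hM]; positivity
  gcongr
  calc (n.choose s : ℝ) * (Real.exp (-(((k : ℝ) - 1) * L) * (θ * s)) * Real.exp ((μ + 1) * s))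
      ≤ (Real.exp s * Real.exp (s * L)) *
        (Real.exp (-(((k : ℝ) - 1) * L) * (θ * s)) * Real.exp ((μ + 1) * s)) := by
        gcongr
        exact choose_bd n s hn hs
    _ = Real.exp (s * ((μ + 2) - (((k : ℝ) - 1) * θ - 1) * L)) := by
        rw [← Real.exp_add, ← Real.exp_add, ← Real.exp_add]
        congr 1; ring
    _ ≤ Real.exp (-2 * s) := by
        apply Real.exp_le_exp.mpr
        nlinarith

open Classical in
/-- the bound for fixed `n` -/
lemma fixed_n {n m k u : ℕ} (hk : 2 ≤ k) (hkn : k ≤ n) (hu : 0 < u) (hun : u ≤ n)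
    (μ ρ θ ε c : ℝ) (hρ : 1 < ρ) (hθ : 0 < θ) (hε : 0 < ε) (hεμ : θ * ε ≤ μ) (hc0 : 0 < c)
    (hβ : 0 < ((k : ℝ) - 1) * θ - 1)
    (hc : θ * Real.log ρ + c ≤
      (μ - θ * ε) * (k * (1 - ρ⁻¹)) / (1 + k * (1 - ρ⁻¹) * ε))
    (hL : μ + 4 ≤ (((k : ℝ) - 1) * θ - 1) * Real.log ε⁻¹)
    (hm : μ * n ≤ m) (hm' : (m : ℝ) ≤ (μ + 1) * n) :
    prG n m k (fun ω : Fin m → (Fin k ↪ Fin n) =>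
        ∃ V : Finset (Fin n), (∀ i ∈ V, u ≤ (i : ℕ)) ∧
          (1 - ε) * n ≤ (V.card : ℝ) ∧ IsStoppingSet k ω V)
      ≤ Real.exp (-c * u) + 2 * Real.exp (-(u : ℝ)) := by
  have hn : 0 < n := by omega
  have hn' : (0 : ℝ) < n := by exact_mod_cast hn
  have hN : 0 < Fintype.card (Fin k ↪ Fin n) := by
    rw [Fintype.card_embedding_eq, Fintype.card_fin, Fintype.card_fin]
    exact Nat.descFactorial_pos.mpr hkn
  have hM : (0 : ℝ) < (Fintype.card (Fin m → (Fin k ↪ Fin n)) : ℝ) := by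
    rw [Fintype.card_fun]; positivity
  set M := (Fintype.card (Fin m → (Fin k ↪ Fin n)) : ℝ) with hMdef
  set B : Finset (Fin n) := Finset.univ.filter (fun i => (i : ℕ) < u) with hB
  have hBc : u ≤ B.card := by
    rw [hB, Fin.card_filter_val_lt]; omega
  set cl : (Fin m → (Fin k ↪ Fin n)) → Finset (Fin n) :=
    fun ω => cls B (fun a => some (ω a)) with hcl
  set J : (Fin m → (Fin k ↪ Fin n)) → ℕ :=
    fun ω => (Finset.univ.filter (fun a => ∀ i, ω a i ∈ cl ω)).card with hJ
  have hclu : ∀ ω, u ≤ (cl ω).card := fun ω => hBc.trans (Finset.card_le_card (sub_cls _ _))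
  set E1 := Finset.univ.filter (fun ω : Fin m → (Fin k ↪ Fin n) =>
    ((cl ω).card : ℝ) ≤ ε * n ∧ (J ω : ℝ) ≤ θ * (cl ω).card) with hE1
  set S := (Finset.range (n + 1)).filter (fun s => u ≤ s ∧ (s : ℝ) ≤ ε * n) with hS
  set E2 : ℕ → Finset (Fin m → (Fin k ↪ Fin n)) := fun s =>
    Finset.univ.filter (fun ω : Fin m → (Fin k ↪ Fin n) =>
      ∃ U : Finset (Fin n), U.card = s ∧
      θ * s ≤ ((Finset.univ.filter (fun a => ∀ i, ω a i ∈ U)).card : ℝ)) with hE2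
  have hsub : Finset.univ.filter (fun ω : Fin m → (Fin k ↪ Fin n) =>
        ∃ V : Finset (Fin n), (∀ i ∈ V, u ≤ (i : ℕ)) ∧
          (1 - ε) * n ≤ (V.card : ℝ) ∧ IsStoppingSet k ω V) ⊆ E1 ∪ S.biUnion E2 := by
    intro ω hω
    obtain ⟨V, hV1, hV2, hV3⟩ := (Finset.mem_filter.mp hω).2
    have hclV : cl ω ⊆ Vᶜ := by
      apply cls_sub
      · intro i hi
        simp only [hB, mem_filter, mem_univ, true_and] at hi
        rw [Finset.mem_compl]
        intro hiV
        have := hV1 i hiV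
        omega
      · intro a e hae
        cases hae
        rcases hV3 a with h | h
        · left
          intro i
          rw [Finset.mem_compl]
          intro hi
          rw [Finset.card_eq_zero] at h
          have : ω a i ∈ nbhd ω a ∩ V :=
            Finset.mem_inter.mpr ⟨Finset.mem_image_of_mem _ (Finset.mem_univ _), hi⟩
          rw [h] at this
          simp at this
        · right
          intro i hi
          have h1 : (nbhd ω a).card ≤ k := by
            unfold nbhd
            exact Finset.card_image_le.trans (by simp)
          have h2 : nbhd ω a ∩ V = nbhd ω a :=
            Finset.eq_of_subset_of_card_le Finset.inter_subset_left (h1.trans h)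
          have h3 : ω a i ∈ nbhd ω a ∩ V := by
            rw [h2]; exact Finset.mem_image_of_mem _ (Finset.mem_univ _)
          exact (Finset.mem_compl.mp hi) (Finset.mem_inter.mp h3).2
    have hcn : (cl ω).card + V.card ≤ n := by
      have h1 := Finset.card_le_card hclV
      rw [Finset.card_compl, Fintype.card_fin] at h1
      have h2 : V.card ≤ n := by simpa using Finset.card_le_univ V
      omega
    have hcn' : ((cl ω).card : ℝ) + V.card ≤ n := by exact_mod_cast hcn
    have hsz : ((cl ω).card : ℝ) ≤ ε * n := by linarith
    rw [Finset.mem_union]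
    by_cases hj : (J ω : ℝ) ≤ θ * (cl ω).card
    · left
      exact Finset.mem_filter.mpr ⟨Finset.mem_univ _, hsz, hj⟩
    · right
      rw [Finset.mem_biUnion]
      refine ⟨(cl ω).card, ?_, ?_⟩
      · simp only [hS, mem_filter, mem_range]
        exact ⟨by omega, hclu ω, hsz⟩
      · simp only [hE2, mem_filter, mem_univ, true_and]
        exact ⟨cl ω, rfl, (not_le.mp hj).le⟩
  have hb1 : (E1.card : ℝ) / M ≤ Real.exp (-c * u) := by
    apply tilt (by omega) hN B ρ _ hρ (Real.exp_pos _).le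
    intro ω hω j D hj hD
    obtain ⟨h1, h2⟩ := (Finset.mem_filter.mp hω).2
    have hjJ : j = J ω := hj
    have hclomega : cls B (fun a => some (ω a)) = cl ω := rfl
    have hsn : (cl ω).card ≤ n := by simpa using Finset.card_le_univ (cl ω)
    have hNr : (0 : ℝ) < (Fintype.card (Fin k ↪ Fin n) : ℝ) := by exact_mod_cast hN
    have hr : (D : ℝ) / (Fintype.card (Fin k ↪ Fin n) : ℝ) ≤
        (((n - (cl ω).card : ℕ) : ℝ) / n) ^ k := by
      rw [div_le_iff₀ hNr]
      have h3 := ins_ratio (k := k) hn (cl ω)ᶜ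
      rw [Finset.card_compl, Fintype.card_fin] at h3
      rw [hD, hclomega]
      simpa only [Finset.mem_compl] using h3
    have := num1 k n m j (cl ω).card μ ρ θ ε c _ hn hρ hθ hε hεμ hc h1
      (by rw [hjJ]; exact h2)
      (by rw [hj]; simpa using Finset.card_le_univ
            (Finset.univ.filter (fun a => ∀ i, ω a i ∈ cls B (fun a => some (ω a)))))
      hm (by positivity) hsn hr
    refine this.trans ?_
    have hρ1 : ρ⁻¹ < 1 := inv_lt_one_of_one_lt₀ hρ
    have hρi : 0 < ρ⁻¹ := inv_pos.mpr (by linarith)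
    have h5 : (u : ℝ) ≤ (cl ω).card := by exact_mod_cast hclu ω
    have h6 : 0 ≤ 1 - ρ⁻¹ + ρ⁻¹ * ((D : ℝ) / (Fintype.card (Fin k ↪ Fin n) : ℝ)) := by
      have : 0 ≤ ρ⁻¹ * ((D : ℝ) / (Fintype.card (Fin k ↪ Fin n) : ℝ)) := by positivity
      linarith
    apply mul_le_mul_of_nonneg_right _ (by positivity)
    apply Real.exp_le_exp.mpr
    nlinarith
  have hb2 : ∀ s ∈ S, ((E2 s).card : ℝ) ≤ Real.exp (-(u : ℝ)) * (1 / 2 : ℝ) ^ s * M := by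
    intro s hs
    simp only [hS, mem_filter, mem_range] at hs
    obtain ⟨h1, h2, h3⟩ := hs
    have hs0 : 0 < s := by omega
    have hs' : (0 : ℝ) < s := by exact_mod_cast hs0
    have hlog : Real.log ε⁻¹ ≤ Real.log ((n : ℝ) / s) := by
      apply Real.log_le_log (by positivity)
      rw [le_div_iff₀ hs', inv_mul_le_iff₀ hε]
      exact h3
    have := many_all (m := m) (k := k) (s := s) hn hs0 (by omega) (by omega) μ θ hm'
      (hL.trans (by gcongr))
    refine this.trans ?_
    gcongr
    have h4 : Real.exp (-2 * (s : ℝ)) = Real.exp (-(s : ℝ)) * Real.exp (-(s : ℝ)) := by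
      rw [← Real.exp_add]; congr 1; ring
    rw [h4]
    have h5 : (u : ℝ) ≤ s := by exact_mod_cast h2
    have h6 : Real.exp (-(s : ℝ)) ≤ (1 / 2 : ℝ) ^ s := by
      have h7 : Real.exp (-(s : ℝ)) = (Real.exp (-1)) ^ s := by
        rw [← Real.exp_nat_mul]; congr 1; ring
      rw [h7]
      apply pow_le_pow_left₀ (Real.exp_pos _).le
      rw [Real.exp_neg, one_div]
      apply inv_anti₀ (by norm_num)
      have := Real.add_one_le_exp 1
      linarith
    gcongr
  have hb3 : ((S.biUnion E2).card : ℝ) ≤ 2 * Real.exp (-(u : ℝ)) * M := by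
    have h1 : ((S.biUnion E2).card : ℝ) ≤ ∑ s ∈ S, ((E2 s).card : ℝ) := by
      exact_mod_cast Finset.card_biUnion_le
    refine h1.trans ((Finset.sum_le_sum hb2).trans ?_)
    rw [← Finset.sum_mul, ← Finset.mul_sum]
    have h2 : ∑ s ∈ S, (1 / 2 : ℝ) ^ s ≤ 2 :=
      (Finset.sum_le_sum_of_subset_of_nonneg (Finset.filter_subset _ _)
        (fun _ _ _ => by positivity)).trans (sum_geometric_two_le (n + 1))
    rw [mul_comm 2]
    gcongr
  unfold prG
  have hcard : ((Finset.univ.filter (fun ω : Fin m → (Fin k ↪ Fin n) =>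
        ∃ V : Finset (Fin n), (∀ i ∈ V, u ≤ (i : ℕ)) ∧
          (1 - ε) * n ≤ (V.card : ℝ) ∧ IsStoppingSet k ω V)).card : ℝ) ≤
        E1.card + (S.biUnion E2).card := by
    exact_mod_cast (Finset.card_le_card hsub).trans (Finset.card_union_le _ _)
  rw [div_le_iff₀ hM] at hb1
  have hfin : ((Finset.univ.filter (fun ω : Fin m → (Fin k ↪ Fin n) =>
        ∃ V : Finset (Fin n), (∀ i ∈ V, u ≤ (i : ℕ)) ∧
          (1 - ε) * n ≤ (V.card : ℝ) ∧ IsStoppingSet k ω V)).card : ℝ) / M ≤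
      Real.exp (-c * u) + 2 * Real.exp (-(u : ℝ)) := by
    rw [div_le_iff₀ hM]
    linarith
  convert hfin

set_option maxHeartbeats 1000000

/-- Lemma `lem:2large`: for `m = ⌈μn⌉` with `μ > 1/(k(k-1))`, there are
`α ∈ (0,1)` and `c > 0` such that the probability of a `k`-stopping set of size at least
`αn` inside `{u(n)+1,…,n}` is at most `exp(-c u(n))` for large `n`. -/
theorem stmt9 (k : ℕ) (hk : 2 ≤ k)
    (μ : ℝ) (hμ : 1 / ((k : ℝ) * ((k : ℝ) - 1)) < μ)
    (u : ℕ → ℕ) (hu : UGood u) :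
    ∃ α ∈ Set.Ioo (0 : ℝ) 1, ∃ c > (0 : ℝ), ∀ᶠ n in atTop,
      prG n ⌈μ * (n : ℝ)⌉₊ k (fun ω : Fin ⌈μ * (n : ℝ)⌉₊ → (Fin k ↪ Fin n) =>
        ∃ V : Finset (Fin n), (∀ i ∈ V, u n ≤ (i : ℕ)) ∧
          α * n ≤ (V.card : ℝ) ∧ IsStoppingSet k ω V)
      ≤ Real.exp (-c * u n) := by
  have hk2 : (2 : ℝ) ≤ k := by exact_mod_cast hk
  have hk1 : (0 : ℝ) < (k : ℝ) - 1 := by linarith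
  have hk0 : (0 : ℝ) < k := by linarith
  have hμ0 : 0 < μ := lt_trans (by positivity) hμ
  set ρ : ℝ := μ * (k * ((k : ℝ) - 1)) with hρdef
  have hρ : 1 < ρ := by
    rw [div_lt_iff₀ (by positivity)] at hμ
    exact hμ
  have hlog : 0 < Real.log ρ := Real.log_pos hρ
  have hlog2 : Real.log ρ < ρ - 1 := Real.log_lt_sub_one_of_pos (by linarith) (by linarith)
  have hthr : 1 / ((k : ℝ) - 1) < (ρ - 1) / (((k : ℝ) - 1) * Real.log ρ) := by
    rw [div_lt_div_iff₀ hk1 (by positivity)]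
    nlinarith
  obtain ⟨θ, hθ1, hθ2⟩ := exists_between hthr
  have hθ : 0 < θ := lt_trans (by positivity) hθ1
  have hβ : 0 < ((k : ℝ) - 1) * θ - 1 := by
    rw [div_lt_iff₀ hk1] at hθ1
    linarith
  have hgap : θ * Real.log ρ < μ * (k * (1 - ρ⁻¹)) := by
    have h1 : μ * (k * (1 - ρ⁻¹)) = (ρ - 1) / ((k : ℝ) - 1) := by
      have : μ = ρ / (k * ((k : ℝ) - 1)) := by rw [hρdef]; field_simp
      rw [this]
      have hρ0 : ρ ≠ 0 := by linarith
      field_simp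
    rw [h1, lt_div_iff₀ hk1]
    rw [lt_div_iff₀ (by positivity)] at hθ2
    nlinarith
  obtain ⟨q, hq1, hq2⟩ := exists_between hgap
  -- choose ε
  have hev1 : ∀ᶠ ε in nhdsWithin (0 : ℝ) (Set.Ioi 0),
      q < (μ - θ * ε) * (k * (1 - ρ⁻¹)) / (1 + k * (1 - ρ⁻¹) * ε) := by
    have hcont : ContinuousAt
        (fun ε : ℝ => (μ - θ * ε) * (k * (1 - ρ⁻¹)) / (1 + k * (1 - ρ⁻¹) * ε)) 0 := by
      apply ContinuousAt.div (by fun_prop) (by fun_prop)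
      simp
    have h0 : q < (fun ε : ℝ => (μ - θ * ε) * (k * (1 - ρ⁻¹)) / (1 + k * (1 - ρ⁻¹) * ε)) 0 := by
      simpa using hq2
    exact (hcont.eventually (lt_mem_nhds h0)).filter_mono nhdsWithin_le_nhds
  have hev2 : ∀ᶠ ε in nhdsWithin (0 : ℝ) (Set.Ioi 0), θ * ε < μ := by
    have hcont : ContinuousAt (fun ε : ℝ => θ * ε) 0 := by fun_prop
    have h0 : (fun ε : ℝ => θ * ε) 0 < μ := by simpa using hμ0
    exact (hcont.eventually (gt_mem_nhds h0)).filter_mono nhdsWithin_le_nhds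
  have hev3 : ∀ᶠ ε in nhdsWithin (0 : ℝ) (Set.Ioi 0),
      (μ + 4) / (((k : ℝ) - 1) * θ - 1) ≤ Real.log ε⁻¹ :=
    (Real.tendsto_log_atTop.comp tendsto_inv_nhdsGT_zero).eventually_ge_atTop _
  have hev4 : ∀ᶠ ε in nhdsWithin (0 : ℝ) (Set.Ioi 0), ε ∈ Set.Ioo (0 : ℝ) 1 :=
    Ioo_mem_nhdsGT one_pos
  obtain ⟨ε, h1, h2, h3, h4, h5⟩ := (hev1.and (hev2.and (hev3.and hev4))).exists
  have hL : μ + 4 ≤ (((k : ℝ) - 1) * θ - 1) * Real.log ε⁻¹ := by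
    rw [div_le_iff₀ hβ] at h3
    linarith
  set c : ℝ := q - θ * Real.log ρ with hc
  have hc0 : 0 < c := by rw [hc]; linarith
  set d : ℝ := min c 1 with hd
  have hd0 : 0 < d := lt_min hc0 one_pos
  refine ⟨1 - ε, ⟨by linarith, by linarith⟩, d / 2, by positivity, ?_⟩
  have hu1 : ∀ᶠ n in atTop, max 1 (4 / d) ≤ (u n : ℝ) := hu.1.eventually_ge_atTop _
  have hu2 : ∀ᶠ n in atTop, (u n : ℝ) / (n : ℝ) < 1 := hu.2.eventually (gt_mem_nhds one_pos)
  filter_upwards [hu1, hu2, eventually_ge_atTop k] with n hn1 hn2 hn3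
  have hn0 : 0 < n := by omega
  have hn' : (0 : ℝ) < n := by exact_mod_cast hn0
  have hn1' : (1 : ℝ) ≤ n := by exact_mod_cast hn0
  have hu0 : (1 : ℝ) ≤ u n := (le_max_left _ _).trans hn1
  have hud : 4 / d ≤ (u n : ℝ) := (le_max_right _ _).trans hn1
  rw [div_le_iff₀ hd0] at hud
  rw [div_lt_one hn'] at hn2
  have hbd := fixed_n (n := n) (m := ⌈μ * (n : ℝ)⌉₊) (k := k) (u := u n) hk hn3
    (by exact_mod_cast hu0) (by exact_mod_cast hn2.le) μ ρ θ ε c hρ hθ h4 h2.le hc0 hβ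
    (by rw [hc]; linarith) hL (Nat.le_ceil _)
    (by
      have := Nat.ceil_lt_add_one (a := μ * (n : ℝ)) (by positivity)
      nlinarith)
  refine hbd.trans ?_
  have hx1 : Real.exp (-c * u n) ≤ Real.exp (-d * u n) := by
    apply Real.exp_le_exp.mpr
    have : d ≤ c := min_le_left _ _
    nlinarith
  have hx2 : Real.exp (-(u n : ℝ)) ≤ Real.exp (-d * u n) := by
    apply Real.exp_le_exp.mpr
    have : d ≤ 1 := min_le_right _ _
    nlinarith
  have hx3 : 3 ≤ Real.exp (d / 2 * u n) := by
    have := Real.add_one_le_exp (d / 2 * u n)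
    nlinarith
  have hx4 : Real.exp (-(d / 2) * u n) = Real.exp (-d * u n) * Real.exp (d / 2 * u n) := by
    rw [← Real.exp_add]; congr 1; ring
  rw [hx4]
  have := Real.exp_pos (-d * u n)
  nlinarith
end
end

section
/- Fix integers k ≥ r ≥ 3, u ∈ ω(1) ∩ o(n), and a constant μ with 0 < μ < μ_c(k,r). Let τ* be the unique solution in (0, 1/(r−2)) of μ = binom(k,r)^{−1} · τ*/(r(1+τ*)^{r−1}), and let τ > τ* be any constant. Then, for the random bipartite graph ensemble with n variables and m = ⌈μ·n^{r−1}/u(n)^{r−2}⌉ constraints, there is a constant C such that for all sufficiently large n, the probability that there exists a (k−r+2)-stopping set of size larger than n − (1+τ)·u(n) contained in {u(n)+1,…,n} is at least 1 − exp( (inf_{λ>0, τ'∈(0,τ)} φ_{k,r}(μ,λ,τ'))·u(n) + C·max{1, u(n)²/n} ); in particular this probability tends to 1 exponentially fast in u(n). -/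
open Filter Finset Asymptotics

noncomputable section

/-- Number of slots of `x` landing in `S`. -/
def hits {n k : ℕ} (x : Fin k ↪ Fin n) (S : Finset (Fin n)) : ℕ :=
  (Finset.univ.filter fun j => x j ∈ S).card

lemma card_nbhd_inter {n m k : ℕ} (ω : Fin m → (Fin k ↪ Fin n)) (a : Fin m)
    (S : Finset (Fin n)) : (nbhd ω a ∩ S).card = hits (ω a) S := by
  unfold nbhd hits
  rw [← Finset.card_map (ω a)]
  congr 1
  ext i
  simp only [Finset.mem_inter, Finset.mem_image, Finset.mem_univ, true_and, Finset.mem_map,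
    Finset.mem_filter]
  constructor
  · rintro ⟨⟨j, rfl⟩, h⟩
    exact ⟨j, h, rfl⟩
  · rintro ⟨j, h, rfl⟩
    exact ⟨⟨j, rfl⟩, h⟩

lemma hits_mono {n k : ℕ} (x : Fin k ↪ Fin n) {S T : Finset (Fin n)} (h : S ⊆ T) :
    hits x S ≤ hits x T := by
  unfold hits
  apply Finset.card_le_card
  intro j
  simp only [Finset.mem_filter, Finset.mem_univ, true_and]
  exact fun hj => h hj

lemma hits_compl {n k : ℕ} (x : Fin k ↪ Fin n) (S : Finset (Fin n)) :
    hits x S + hits x Sᶜ = k := by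
  unfold hits
  have := Finset.card_filter_add_card_filter_not (s := (Finset.univ : Finset (Fin k)))
    (fun j => x j ∈ S)
  simpa using this

/-- set known when `S` explored -/
def cl {n m k : ℕ} (I : Finset (Fin n)) (q : ℕ) (ω : Fin m → (Fin k ↪ Fin n))
    (S : Finset (Fin n)) : Finset (Fin n) :=
  I ∪ (Finset.univ.filter fun a => q ≤ hits (ω a) S).biUnion (fun a => nbhd ω a)

def nrev {n m k : ℕ} (q : ℕ) (ω : Fin m → (Fin k ↪ Fin n))
    (S : Finset (Fin n)) : ℕ := (Finset.univ.filter fun a => q ≤ hits (ω a) S).card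

/-- one exploration step with known set `K`, state `(S, T)` -/
def stp {n : ℕ} (K : Finset (Fin n)) (p : Finset (Fin n) × Finset (Fin n)) :
    Finset (Fin n) × Finset (Fin n) :=
  if h : (K \ p.1).Nonempty ∧ (p.2 \ p.1).Nonempty then
    (insert ((K \ p.1).min' h.1) p.1,
      p.2.map (Equiv.swap ((K \ p.1).min' h.1) ((p.2 \ p.1).min' h.2)).toEmbedding)
  else p

/-- permutation used -/
def prm {n : ℕ} (K : Finset (Fin n)) (p : Finset (Fin n) × Finset (Fin n)) :
    Equiv.Perm (Fin n) :=
  if h : (K \ p.1).Nonempty ∧ (p.2 \ p.1).Nonempty then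
    Equiv.swap ((K \ p.1).min' h.1) ((p.2 \ p.1).min' h.2)
  else 1

lemma prm_invol {n : ℕ} (K : Finset (Fin n)) (p : Finset (Fin n) × Finset (Fin n)) (i : Fin n) :
    prm K p (prm K p i) = i := by
  unfold prm
  split_ifs <;> simp

lemma prm_fix {n : ℕ} (K : Finset (Fin n)) (p : Finset (Fin n) × Finset (Fin n)) (i : Fin n)
    (hi : i ∈ p.1) : prm K p i = i := by
  unfold prm
  split_ifs with h
  · apply Equiv.swap_apply_of_ne_of_ne
    · rintro rfl
      have := Finset.min'_mem _ h.1
      exact (Finset.mem_sdiff.1 this).2 hi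
    · rintro rfl
      have := Finset.min'_mem _ h.2
      exact (Finset.mem_sdiff.1 this).2 hi
  · simp

lemma stp_snd {n : ℕ} (K : Finset (Fin n)) (p : Finset (Fin n) × Finset (Fin n)) :
    (stp K p).2 = p.2.map (prm K p).toEmbedding := by
  unfold stp prm
  split_ifs with h
  · rfl
  · ext i
    rw [Finset.mem_map_equiv]
    rfl

lemma stp_mono {n : ℕ} (K : Finset (Fin n)) (p : Finset (Fin n) × Finset (Fin n)) :
    p.1 ⊆ (stp K p).1 := by
  unfold stp
  split_ifs with h
  · exact Finset.subset_insert _ _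
  · exact subset_rfl

lemma stp_fst_sub {n : ℕ} (K : Finset (Fin n)) (p : Finset (Fin n) × Finset (Fin n))
    (h : p.1 ⊆ K) : (stp K p).1 ⊆ K := by
  unfold stp
  split_ifs with h'
  · exact Finset.insert_subset (Finset.mem_sdiff.1 (Finset.min'_mem _ h'.1)).1 h
  · exact h

lemma stp_sub {n : ℕ} (K : Finset (Fin n)) (p : Finset (Fin n) × Finset (Fin n))
    (h : p.1 ⊆ p.2) : (stp K p).1 ⊆ (stp K p).2 := by
  unfold stp
  split_ifs with h'
  · have h1 := Finset.mem_sdiff.1 (Finset.min'_mem _ h'.1)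
    have h2 := Finset.mem_sdiff.1 (Finset.min'_mem _ h'.2)
    apply Finset.insert_subset
    · rw [Finset.mem_map_equiv]
      simpa using h2.1
    · intro i hi
      rw [Finset.mem_map_equiv]
      rw [Equiv.symm_swap, Equiv.swap_apply_of_ne_of_ne]
      · exact h hi
      · rintro rfl; exact h1.2 hi
      · rintro rfl; exact h2.2 hi
  · exact h

/-- exploration process -/
def expl {n m k : ℕ} (I T : Finset (Fin n)) (q : ℕ) (ω : Fin m → (Fin k ↪ Fin n)) :
    ℕ → Finset (Fin n) × Finset (Fin n)
  | 0 => (I, T)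
  | s + 1 => stp (cl I q ω (expl I T q ω s).1) (expl I T q ω s)

section
variable {n m k : ℕ} (I T : Finset (Fin n)) (q : ℕ) (ω : Fin m → (Fin k ↪ Fin n))

lemma expl_mono {s s' : ℕ} (h : s ≤ s') : (expl I T q ω s).1 ⊆ (expl I T q ω s').1 := by
  induction h with
  | refl => exact subset_rfl
  | step _ ih => exact ih.trans (stp_mono _ _)

lemma expl_sub (h : I ⊆ T) (s : ℕ) : (expl I T q ω s).1 ⊆ (expl I T q ω s).2 := by
  induction s with
  | zero => exact h
  | succ s ih => exact stp_sub _ _ ih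

lemma expl_card (s : ℕ) : (expl I T q ω s).2.card = T.card := by
  induction s with
  | zero => rfl
  | succ s ih => rw [expl, stp_snd, Finset.card_map, ih]

lemma cl_mono {S S' : Finset (Fin n)} (h : S ⊆ S') : cl I q ω S ⊆ cl I q ω S' := by
  unfold cl
  apply Finset.union_subset_union subset_rfl
  apply Finset.biUnion_subset_biUnion_of_subset_left
  intro a
  simp only [Finset.mem_filter, Finset.mem_univ, true_and]
  exact fun ha => ha.trans (hits_mono _ h)

lemma expl_sub_cl (s : ℕ) : (expl I T q ω s).1 ⊆ cl I q ω (expl I T q ω s).1 := by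
  induction s with
  | zero => exact Finset.subset_union_left
  | succ s ih =>
    exact (stp_fst_sub _ _ ih).trans (cl_mono I q ω (stp_mono _ _))

lemma cl_card_step {S S' : Finset (Fin n)} (h : S ⊆ S') (h' : S' ⊆ cl I q ω S) :
    (cl I q ω S').card + (k - q) * nrev q ω S ≤ (cl I q ω S).card + (k - q) * nrev q ω S' := by
  set N := (Finset.univ.filter fun a => q ≤ hits (ω a) S) with hN
  set N' := (Finset.univ.filter fun a => q ≤ hits (ω a) S') with hN'
  have hsub : N ⊆ N' := by
    intro a
    simp only [hN, hN', Finset.mem_filter, Finset.mem_univ, true_and]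
    exact fun ha => ha.trans (hits_mono _ h)
  have h1 : cl I q ω S' ⊆ cl I q ω S ∪ (N' \ N).biUnion (fun a => nbhd ω a \ cl I q ω S) := by
    intro i hi
    by_cases hiS : i ∈ cl I q ω S
    · exact Finset.mem_union_left _ hiS
    · apply Finset.mem_union_right
      rcases Finset.mem_union.1 hi with hi | hi
      · exact absurd (Finset.mem_union_left _ hi) hiS
      · obtain ⟨a, ha, hia⟩ := Finset.mem_biUnion.1 hi
        refine Finset.mem_biUnion.2 ⟨a, Finset.mem_sdiff.2 ⟨ha, fun haN => hiS ?_⟩,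
          Finset.mem_sdiff.2 ⟨hia, hiS⟩⟩
        exact Finset.mem_union_right _ (Finset.mem_biUnion.2 ⟨a, haN, hia⟩)
  have h2 : ((N' \ N).biUnion (fun a => nbhd ω a \ cl I q ω S)).card ≤ (N' \ N).card * (k - q) := by
    apply Finset.card_biUnion_le_card_mul
    intro a ha
    have haN : q ≤ hits (ω a) S' := by
      have := (Finset.mem_sdiff.1 ha).1
      simpa [hN'] using this
    have h3 : (nbhd ω a \ cl I q ω S).card = hits (ω a) (cl I q ω S)ᶜ := by
      rw [← card_nbhd_inter, Finset.sdiff_eq_inter_compl]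
    rw [h3]
    have := hits_compl (ω a) (cl I q ω S)
    have := hits_mono (ω a) h'
    omega
  have h4 := (Finset.card_le_card h1).trans (Finset.card_union_le _ _)
  have h5 := Finset.card_sdiff_add_card_eq_card hsub
  have h6 : nrev q ω S = N.card := rfl
  have h7 : nrev q ω S' = N'.card := rfl
  rw [h6, h7, ← h5]
  nlinarith

lemma expl_cl_card (s : ℕ) (hI : I.card < I.card + 1) :
    (cl I q ω (expl I T q ω s).1).card ≤ I.card + (k - q) * nrev q ω (expl I T q ω s).1 := by
  induction s with
  | zero =>
    show (cl I q ω I).card ≤ I.card + (k - q) * nrev q ω I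
    have h1 : cl I q ω I ⊆ I ∪ (Finset.univ.filter fun a => q ≤ hits (ω a) I).biUnion
        (fun a => nbhd ω a \ I) := by
      intro i hi
      by_cases hiS : i ∈ I
      · exact Finset.mem_union_left _ hiS
      · apply Finset.mem_union_right
        rcases Finset.mem_union.1 hi with hi | hi
        · exact absurd hi hiS
        · obtain ⟨a, ha, hia⟩ := Finset.mem_biUnion.1 hi
          exact Finset.mem_biUnion.2 ⟨a, ha, Finset.mem_sdiff.2 ⟨hia, hiS⟩⟩
    have h2 : ((Finset.univ.filter fun a => q ≤ hits (ω a) I).biUnion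
        (fun a => nbhd ω a \ I)).card ≤ nrev q ω I * (k - q) := by
      apply Finset.card_biUnion_le_card_mul
      intro a ha
      have haN : q ≤ hits (ω a) I := by simpa using ha
      have h3 : (nbhd ω a \ I).card = hits (ω a) Iᶜ := by
        rw [← card_nbhd_inter, Finset.sdiff_eq_inter_compl]
      rw [h3]
      have := hits_compl (ω a) I
      omega
    have h4 := (Finset.card_le_card h1).trans (Finset.card_union_le _ _)
    rw [mul_comm]; omega
  | succ s ih =>
    have := cl_card_step I q ω (stp_mono (cl I q ω (expl I T q ω s).1) (expl I T q ω s))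
      (stp_fst_sub _ _ (expl_sub_cl I T q ω s))
    change (cl I q ω (stp _ _).1).card ≤ I.card + (k - q) * nrev q ω (stp _ _).1
    omega

lemma expl_stable (s : ℕ) : s ≤ (expl I T q ω s).1.card ∨
    ¬ ((cl I q ω (expl I T q ω s).1 \ (expl I T q ω s).1).Nonempty ∧
      ((expl I T q ω s).2 \ (expl I T q ω s).1).Nonempty) := by
  induction s with
  | zero => left; omega
  | succ s ih =>
    by_cases h : ((cl I q ω (expl I T q ω s).1 \ (expl I T q ω s).1).Nonempty ∧
      ((expl I T q ω s).2 \ (expl I T q ω s).1).Nonempty)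
    · left
      have h0 := ih.resolve_right (not_not.2 h)
      rw [expl, stp, dif_pos h]
      rw [Finset.card_insert_of_notMem]
      · omega
      · exact (Finset.mem_sdiff.1 (Finset.min'_mem _ h.1)).2
    · right
      have : expl I T q ω (s+1) = expl I T q ω s := by
        rw [expl, stp, dif_neg h]
      rw [this]; exact h

/-- twistelling -/
def twist (s : ℕ) : Fin m → (Fin k ↪ Fin n) := fun a =>
  if q ≤ hits (ω a) (expl I T q ω s).1 then ω a
  else (ω a).trans (prm (cl I q ω (expl I T q ω s).1) (expl I T q ω s)).toEmbedding

lemma twist_hits (s : ℕ) (a : Fin m) (S : Finset (Fin n)) (hS : S ⊆ (expl I T q ω s).1) :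
    hits (twist I T q ω s a) S = hits (ω a) S := by
  unfold twist
  split_ifs with h
  · rfl
  · unfold hits
    congr 1
    ext j
    simp only [Finset.mem_filter, Finset.mem_univ, true_and, Function.Embedding.trans_apply,
      Equiv.coe_toEmbedding]
    constructor
    · intro hj
      have h1 := prm_fix (cl I q ω (expl I T q ω s).1) _ _ (hS hj)
      rw [prm_invol] at h1
      rw [h1]; exact hj
    · intro hj
      rw [prm_fix _ _ _ (hS hj)]; exact hj

lemma twist_cl (s : ℕ) (S : Finset (Fin n)) (hS : S ⊆ (expl I T q ω s).1) :
    cl I q (twist I T q ω s) S = cl I q ω S := by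
  unfold cl
  simp only [twist_hits I T q ω s _ S hS]
  congr 1
  apply Finset.biUnion_congr rfl
  intro a ha
  have : q ≤ hits (ω a) (expl I T q ω s).1 := by
    have : q ≤ hits (ω a) S := by simpa using ha
    exact this.trans (hits_mono _ hS)
  unfold nbhd twist
  rw [if_pos this]

lemma twist_expl (s i : ℕ) (hi : i ≤ s) :
    expl I T q (twist I T q ω s) i = expl I T q ω i := by
  induction i with
  | zero => rfl
  | succ i ih =>
    rw [expl, expl, ih (by omega), twist_cl]
    exact expl_mono I T q ω (by omega)

lemma twist_invol (s : ℕ) : twist I T q (twist I T q ω s) s = ω := by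
  funext a
  have h1 := twist_expl I T q ω s s le_rfl
  have h2 := twist_hits I T q ω s a (expl I T q ω s).1 subset_rfl
  have h3 := twist_cl I T q ω s (expl I T q ω s).1 subset_rfl
  rw [twist.eq_1 I T q (twist I T q ω s) s]
  rw [h1, h2, h3]
  split_ifs with h
  · unfold twist; rw [if_pos h]
  · ext j
    unfold twist
    rw [if_neg h]
    simp [prm_invol]

lemma twist_nrev (hIT : I ⊆ T) (s : ℕ) :
    nrev q (twist I T q ω s) (expl I T q ω s).2 = nrev q ω (expl I T q ω (s+1)).2 := by
  unfold nrev
  refine congrArg Finset.card (Finset.filter_congr ?_)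
  intro a _
  have hsub := expl_sub I T q ω hIT s
  have hsub' := expl_sub I T q ω hIT (s+1)
  have hmono := expl_mono I T q ω (Nat.le_succ s)
  by_cases h : q ≤ hits (ω a) (expl I T q ω s).1
  · have h1 : twist I T q ω s a = ω a := by unfold twist; rw [if_pos h]
    rw [h1]
    exact ⟨fun _ => h.trans (hits_mono _ (hmono.trans hsub')),
      fun _ => h.trans (hits_mono _ hsub)⟩
  · have h1 : hits (twist I T q ω s a) (expl I T q ω s).2
        = hits (ω a) (expl I T q ω (s+1)).2 := by
      unfold twist
      rw [if_neg h]
      unfold hits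
      congr 1
      ext j
      rw [expl, stp_snd]
      simp only [Finset.mem_filter, Finset.mem_univ, true_and, Function.Embedding.trans_apply,
        Equiv.coe_toEmbedding]
      constructor
      · intro hj
        exact Finset.mem_map.2 ⟨_, hj, by simp [prm_invol]⟩
      · intro hj
        obtain ⟨i, hi, hij⟩ := Finset.mem_map.1 hj
        simp only [Equiv.coe_toEmbedding] at hij
        rw [← hij, prm_invol]; exact hi
    rw [h1]

end

lemma sum_expl {n m k : ℕ} (I T : Finset (Fin n)) (q : ℕ) (hIT : I ⊆ T) (w : ℝ) (s : ℕ) :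
    ∑ ω : Fin m → (Fin k ↪ Fin n), w ^ nrev q ω (expl I T q ω s).2
      = ∑ ω : Fin m → (Fin k ↪ Fin n), w ^ nrev q ω T := by
  induction s with
  | zero => rfl
  | succ s ih =>
    rw [← ih]
    have hinv : Function.Involutive (fun ω : Fin m → (Fin k ↪ Fin n) => twist I T q ω s) :=
      fun ω => twist_invol I T q ω s
    refine Fintype.sum_bijective _ hinv.bijective _ _ ?_
    intro ω
    rw [twist_expl I T q ω s s le_rfl, twist_nrev I T q ω hIT s]

lemma nrev_sum {n m k : ℕ} (q : ℕ) (T : Finset (Fin n)) (w : ℝ) :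
    ∑ ω : Fin m → (Fin k ↪ Fin n), w ^ nrev q ω T
      = (∑ x : Fin k ↪ Fin n, if q ≤ hits x T then w else 1) ^ m := by
  have := Finset.sum_pow' (Finset.univ : Finset (Fin k ↪ Fin n))
    (fun x => if q ≤ hits x T then w else 1) m
  rw [this, Fintype.piFinset_univ]
  apply Finset.sum_congr rfl
  intro ω _
  rw [Finset.prod_ite]
  simp [nrev]

lemma card_slot {n k : ℕ} (T : Finset (Fin n)) (R : Finset (Fin k)) :
    (Finset.univ.filter fun x : Fin k ↪ Fin n => ∀ j ∈ R, x j ∈ T).card * n ^ R.card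
      ≤ Fintype.card (Fin k ↪ Fin n) * T.card ^ R.card := by
  induction R using Finset.induction_on with
  | empty => simp
  | insert i R hi ih =>
    rw [Finset.card_insert_of_notMem hi, pow_succ, pow_succ]
    set A := Finset.univ.filter fun x : Fin k ↪ Fin n => ∀ j ∈ R, x j ∈ T with hA
    set B := Finset.univ.filter fun x : Fin k ↪ Fin n => ∀ j ∈ insert i R, x j ∈ T with hB
    have hBA : B ⊆ A := by
      intro x
      simp only [hA, hB, Finset.mem_filter, Finset.mem_univ, true_and, Finset.mem_insert]
      exact fun h j hj => h j (Or.inr hj)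
    have key : B.card * Tᶜ.card ≤ (A \ B).card * T.card := by
      rw [← Finset.card_product, ← Finset.card_product]
      apply Finset.card_le_card_of_injOn
        (fun p => (p.1.trans (Equiv.swap (p.1 i) p.2).toEmbedding, p.1 i))
      · rintro ⟨x, z⟩ h
        simp only [hA, hB, Finset.coe_product, Set.mem_prod, Finset.mem_coe, Finset.mem_filter,
          Finset.mem_univ, true_and, Finset.mem_compl, Finset.mem_sdiff, Finset.mem_insert,
          Function.Embedding.trans_apply, Equiv.coe_toEmbedding] at h ⊢
        obtain ⟨h1, h2⟩ := h
        refine ⟨⟨?_, ?_⟩, h1 i (Or.inl rfl)⟩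
        · intro j hj
          have hxj := h1 j (Or.inr hj)
          rw [Equiv.swap_apply_of_ne_of_ne]
          · exact hxj
          · intro h; exact hi (x.injective h ▸ hj)
          · rintro rfl; exact h2 hxj
        · intro h
          have := h i (Or.inl rfl)
          rw [Equiv.swap_apply_left] at this
          exact h2 this
      · rintro ⟨x, z⟩ _ ⟨x', z'⟩ _ h
        simp only [Prod.mk.injEq] at h
        obtain ⟨h1, h2⟩ := h
        have h3 : ∀ j, Equiv.swap (x i) z (x j) = Equiv.swap (x' i) z' (x' j) := fun j =>
          DFunLike.congr_fun h1 j
        have hz : z = z' := by simpa using h3 i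
        subst hz
        rw [h2] at h3
        have hx : x = x' := by
          ext j
          rw [(Equiv.swap (x' i) z).injective (h3 j)]
        rw [hx]
    have h1 := Finset.card_sdiff_add_card_eq_card hBA
    have h2 : T.card + Tᶜ.card = n := by simpa using Finset.card_add_card_compl T
    have h3 : B.card * n ≤ A.card * T.card := by
      calc B.card * n = B.card * T.card + B.card * Tᶜ.card := by rw [← mul_add, h2]
        _ ≤ B.card * T.card + (A \ B).card * T.card := Nat.add_le_add_left key _
        _ = A.card * T.card := by rw [← h1]; ring
    calc B.card * (n ^ R.card * n) = (B.card * n) * n ^ R.card := by ring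
      _ ≤ (A.card * T.card) * n ^ R.card := Nat.mul_le_mul_right _ h3
      _ = (A.card * n ^ R.card) * T.card := by ring
      _ ≤ (Fintype.card (Fin k ↪ Fin n) * T.card ^ R.card) * T.card := Nat.mul_le_mul_right _ ih
      _ = _ := by ring

lemma card_hits {n k : ℕ} (q : ℕ) (T : Finset (Fin n)) :
    (Finset.univ.filter fun x : Fin k ↪ Fin n => q ≤ hits x T).card * n ^ q
      ≤ Fintype.card (Fin k ↪ Fin n) * (k.choose q * T.card ^ q) := by
  have h1 : (Finset.univ.filter fun x : Fin k ↪ Fin n => q ≤ hits x T) ⊆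
      (Finset.powersetCard q (Finset.univ : Finset (Fin k))).biUnion
        (fun R => Finset.univ.filter fun x : Fin k ↪ Fin n => ∀ j ∈ R, x j ∈ T) := by
    intro x hx
    have hx : q ≤ hits x T := by simpa using hx
    obtain ⟨R, hR, hRc⟩ := Finset.exists_subset_card_eq hx
    refine Finset.mem_biUnion.2 ⟨R, Finset.mem_powersetCard.2 ⟨Finset.subset_univ _, hRc⟩, ?_⟩
    simp only [Finset.mem_filter, Finset.mem_univ, true_and]
    intro j hj
    simpa using hR hj
  calc _ ≤ (∑ R ∈ Finset.powersetCard q (Finset.univ : Finset (Fin k)),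
        (Finset.univ.filter fun x : Fin k ↪ Fin n => ∀ j ∈ R, x j ∈ T).card) * n ^ q :=
        Nat.mul_le_mul_right _ ((Finset.card_le_card h1).trans Finset.card_biUnion_le)
    _ = ∑ R ∈ Finset.powersetCard q (Finset.univ : Finset (Fin k)),
        (Finset.univ.filter fun x : Fin k ↪ Fin n => ∀ j ∈ R, x j ∈ T).card * n ^ q :=
        Finset.sum_mul _ _ _
    _ ≤ ∑ R ∈ Finset.powersetCard q (Finset.univ : Finset (Fin k)),
        Fintype.card (Fin k ↪ Fin n) * T.card ^ q := by
        apply Finset.sum_le_sum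
        intro R hR
        have := (Finset.mem_powersetCard.1 hR).2
        have h := card_slot T R
        rwa [this] at h
    _ = _ := by
        rw [Finset.sum_const, Finset.card_powersetCard]
        simp
        ring

lemma good_of_small {n m k r U t : ℕ} (hr : 3 ≤ r) (hrk : r ≤ k) (htn : t ≤ n)
    (I T : Finset (Fin n)) (hI : ∀ i, i ∈ I ↔ (i : ℕ) < U) (hT : T.card = t) (hIT : I ⊆ T)
    (ω : Fin m → (Fin k ↪ Fin n)) (h : (expl I T (r-1) ω n).1.card < t) :
    ∃ V : Finset (Fin n), (∀ i ∈ V, U ≤ (i : ℕ)) ∧ n < V.card + t ∧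
      IsStoppingSet (k - r + 2) ω V := by
  set S := (expl I T (r-1) ω n).1 with hS
  have h1 := expl_stable I T (r-1) ω n
  have h2 : ((expl I T (r-1) ω n).2 \ S).Nonempty := by
    rw [← Finset.card_pos]
    have := Finset.le_card_sdiff S (expl I T (r-1) ω n).2
    rw [expl_card, hT] at this
    omega
  have h3 : ¬ (cl I (r-1) ω S \ S).Nonempty := by
    rcases h1 with h1 | h1
    · rw [← hS] at h1; omega
    · exact fun h => h1 ⟨h, h2⟩
  have h4 : cl I (r-1) ω S ⊆ S := by
    rwa [Finset.not_nonempty_iff_eq_empty, Finset.sdiff_eq_empty_iff_subset] at h3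
  refine ⟨Sᶜ, ?_, ?_, ?_⟩
  · intro i hi
    by_contra hlt
    exact (Finset.mem_compl.1 hi) (h4 (Finset.mem_union_left _ ((hI i).2 (by omega))))
  · have : S.card + Sᶜ.card = n := by simpa using Finset.card_add_card_compl S
    omega
  · intro a
    have hc := hits_compl (ω a) S
    rw [card_nbhd_inter]
    by_cases ha : r - 1 ≤ hits (ω a) S
    · left
      rw [← card_nbhd_inter, Finset.card_eq_zero, ← Finset.sdiff_eq_inter_compl,
        Finset.sdiff_eq_empty_iff_subset]
      refine subset_trans ?_ h4
      intro i hi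
      exact Finset.mem_union_right _ (Finset.mem_biUnion.2 ⟨a, by simpa using ha, hi⟩)
    · right; omega

lemma main_prob {n m k r U t : ℕ} (hr : 3 ≤ r) (hrk : r ≤ k) (hkn : k ≤ n) (hUt : U ≤ t)
    (htn : t ≤ n) (lam : ℝ) (hlam : 0 < lam) (P : (Fin m → (Fin k ↪ Fin n)) → Prop)
    (hP : ∀ ω, (∃ V : Finset (Fin n), (∀ i ∈ V, U ≤ (i : ℕ)) ∧ n < V.card + t ∧
      IsStoppingSet (k - r + 2) ω V) → P ω) :
    1 - Real.exp (-lam * ((t : ℝ) - U) + m * ((Real.exp (((k : ℝ) - r + 1) * lam) - 1)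
      * ((k.choose (r-1) : ℝ) * ((t : ℝ) / n) ^ (r-1)))) ≤ prG n m k P := by
  classical
  have hcardI : (Finset.univ.filter fun i : Fin n => (i : ℕ) < U).card = U := by
    rw [Fin.card_filter_val_lt]; omega
  set I := Finset.univ.filter fun i : Fin n => (i : ℕ) < U with hIdef
  have hI : ∀ i, i ∈ I ↔ (i : ℕ) < U := by intro i; simp [hIdef]
  obtain ⟨T, hIT, hT⟩ := Finset.exists_superset_card_eq (s := I) (n := t)
    (by omega) (by simpa using htn)
  set w := Real.exp (((k : ℝ) - r + 1) * lam) with hw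
  have hkr : (0 : ℝ) ≤ (k : ℝ) - r + 1 := by
    have : (r : ℝ) ≤ k := by exact_mod_cast hrk
    linarith
  have hw1 : 1 ≤ w := Real.one_le_exp (by positivity)
  set D : ℝ := (Fintype.card (Fin k ↪ Fin n) : ℝ) with hD
  have hDpos : 0 < D := by
    have : 0 < Fintype.card (Fin k ↪ Fin n) := by
      rw [Fintype.card_embedding_eq]
      simpa using Nat.descFactorial_pos.2 hkn |>.ne'.bot_lt
    rw [hD]; exact_mod_cast this
  have hnpos : (0 : ℝ) < n := by
    have : 0 < n := by omega
    exact_mod_cast this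
  have htot : (Fintype.card (Fin m → (Fin k ↪ Fin n)) : ℝ) = D ^ m := by
    rw [hD]; simp
  set good := (Finset.univ.filter P)
  set bad := (Finset.univ.filter fun ω => ¬ P ω) with hbad
  have hgb : (good.card : ℝ) + bad.card = D ^ m := by
    rw [← htot]
    have := Finset.card_filter_add_card_filter_not
      (s := (Finset.univ : Finset (Fin m → (Fin k ↪ Fin n)))) P
    rw [Finset.card_univ] at this
    exact_mod_cast this
  have hpr : prG n m k P = 1 - bad.card / D ^ m := by
    unfold prG
    rw [htot]
    have : (good.card : ℝ) = D ^ m - bad.card := by linarith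
    have h2 : ((@Finset.filter _ P (Classical.decPred P) Finset.univ).card : ℝ) = good.card := by
      congr!
    rw [h2, this, sub_div, div_self (by positivity)]
  rw [hpr]
  have hbadle : (bad.card : ℝ) * Real.exp (lam * ((t : ℝ) - U)) ≤
      ∑ ω : Fin m → (Fin k ↪ Fin n), w ^ nrev (r-1) ω (expl I T (r-1) ω n).2 := by
    rw [← nsmul_eq_mul, ← Finset.sum_const]
    refine (Finset.sum_le_sum ?_).trans
      (Finset.sum_le_sum_of_subset_of_nonneg (Finset.subset_univ bad) ?_)
    · intro ω hω
      have hω : ¬ P ω := by simpa [hbad] using hω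
      have h1 : t ≤ (expl I T (r-1) ω n).1.card := by
        by_contra hlt
        exact hω (hP ω (good_of_small hr hrk htn I T hI hT hIT ω (by omega)))
      have h2 := Finset.card_le_card (expl_sub_cl I T (r-1) ω n)
      have h3 := expl_cl_card I T (r-1) ω n (by omega)
      have h4 : nrev (r-1) ω (expl I T (r-1) ω n).1 ≤ nrev (r-1) ω (expl I T (r-1) ω n).2 := by
        unfold nrev
        apply Finset.card_le_card
        intro a
        simp only [Finset.mem_filter, Finset.mem_univ, true_and]
        exact fun ha => ha.trans (hits_mono _ (expl_sub I T (r-1) ω hIT n))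
      have h5 : t ≤ U + (k - (r-1)) * nrev (r-1) ω (expl I T (r-1) ω n).2 := by
        have := Nat.mul_le_mul_left (k - (r-1)) h4
        omega
      have h6 : (t : ℝ) - U ≤ ((k : ℝ) - r + 1) * nrev (r-1) ω (expl I T (r-1) ω n).2 := by
        have h7 : ((k - (r-1) : ℕ) : ℝ) = (k : ℝ) - r + 1 := by
          rw [Nat.cast_sub (by omega), Nat.cast_sub (by omega)]; push_cast; ring
        rw [← h7]
        have : (t : ℝ) ≤ U + ((k - (r-1) : ℕ) : ℝ) * nrev (r-1) ω (expl I T (r-1) ω n).2 := by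
          exact_mod_cast h5
        linarith
      rw [hw, ← Real.exp_nat_mul]
      apply Real.exp_le_exp.2
      nlinarith
    · intro ω _ _
      positivity
  rw [sum_expl I T (r-1) hIT, nrev_sum] at hbadle
  have hsum : (∑ x : Fin k ↪ Fin n, if r - 1 ≤ hits x T then w else 1) ≤
      D * Real.exp ((w - 1) * ((k.choose (r-1) : ℝ) * ((t : ℝ) / n) ^ (r-1))) := by
    have h1 : (∑ x : Fin k ↪ Fin n, if r - 1 ≤ hits x T then w else 1) =
        D + (w - 1) * (Finset.univ.filter fun x : Fin k ↪ Fin n => r - 1 ≤ hits x T).card := by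
      have : ∀ x : Fin k ↪ Fin n, (if r - 1 ≤ hits x T then w else 1) =
          1 + (w - 1) * (if r - 1 ≤ hits x T then 1 else 0) := by
        intro x; split_ifs <;> ring
      simp only [this, Finset.sum_add_distrib, ← Finset.mul_sum]
      simp [hD]
    have h2 := card_hits (k := k) (r-1) T
    rw [hT] at h2
    have h3 : ((Finset.univ.filter fun x : Fin k ↪ Fin n => r - 1 ≤ hits x T).card : ℝ) ≤
        D * ((k.choose (r-1) : ℝ) * ((t : ℝ) / n) ^ (r-1)) := by
      have h4 : ((Finset.univ.filter fun x : Fin k ↪ Fin n => r - 1 ≤ hits x T).card : ℝ)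
          * (n : ℝ) ^ (r-1) ≤ D * ((k.choose (r-1) : ℝ) * (t : ℝ) ^ (r-1)) := by
        rw [hD]; exact_mod_cast h2
      rw [div_pow, ← mul_div_assoc, ← mul_div_assoc, le_div_iff₀ (by positivity)]
      exact h4
    rw [h1]
    have h5 := Real.add_one_le_exp ((w - 1) * ((k.choose (r-1) : ℝ) * ((t : ℝ) / n) ^ (r-1)))
    have h6 := mul_le_mul_of_nonneg_left h3 (sub_nonneg.2 hw1)
    have h7 := mul_le_mul_of_nonneg_left h5 hDpos.le
    nlinarith
  have hsum0 : 0 ≤ (∑ x : Fin k ↪ Fin n, if r - 1 ≤ hits x T then w else 1) := by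
    apply Finset.sum_nonneg; intro x _; split_ifs <;> positivity
  have hfin := hbadle.trans (pow_le_pow_left₀ hsum0 hsum m)
  rw [mul_pow, ← Real.exp_nat_mul] at hfin
  have : (bad.card : ℝ) / D ^ m ≤ Real.exp (-lam * ((t : ℝ) - U) + m * ((w - 1)
      * ((k.choose (r-1) : ℝ) * ((t : ℝ) / n) ^ (r-1)))) := by
    rw [div_le_iff₀ (by positivity), Real.exp_add]
    have h8 : Real.exp (-lam * ((t : ℝ) - U)) * Real.exp (lam * ((t : ℝ) - U)) = 1 := by
      rw [← Real.exp_add]; simp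
    have h9 := mul_le_mul_of_nonneg_left hfin (Real.exp_pos (-lam * ((t : ℝ) - U))).le
    calc (bad.card : ℝ) = bad.card * (Real.exp (-lam * ((t : ℝ) - U))
          * Real.exp (lam * ((t : ℝ) - U))) := by rw [h8, mul_one]
      _ = Real.exp (-lam * ((t : ℝ) - U)) * (bad.card * Real.exp (lam * ((t : ℝ) - U))) := by ring
      _ ≤ _ := h9
      _ = _ := by ring
  linarith

lemma pow_add_one_le (x : ℝ) (hx : 1 ≤ x) (p : ℕ) :
    (x + 1) ^ (p + 1) ≤ x ^ (p + 1) + (2 ^ (p + 1) - 1) * x ^ p := by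
  induction p with
  | zero => norm_num
  | succ p ih =>
    have h1 : x ^ p ≤ x ^ (p+1) := pow_le_pow_right₀ hx (by omega)
    have h2 : (1 : ℝ) ≤ 2 ^ (p + 1) := one_le_pow₀ (by norm_num)
    have h3 := mul_le_mul_of_nonneg_right ih (by linarith : 0 ≤ x + 1)
    have h4 : 0 ≤ ((2 : ℝ) ^ (p + 1) - 1) * (x ^ (p+1) - x ^ p) :=
      mul_nonneg (by linarith) (by linarith)
    have e1 : x ^ (p+1) = x ^ p * x := pow_succ _ _
    have e2 : x ^ (p+1+1) = x ^ p * x * x := by rw [pow_succ, pow_succ]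
    have e3 : (2:ℝ) ^ (p+1+1) = 2 ^ (p+1) * 2 := pow_succ _ _
    rw [pow_succ (x+1) (p+1), e2, e3]
    rw [e1] at h3 h4 ⊢
    nlinarith

lemma neg_near (f : ℝ → ℝ) (f' x₀ : ℝ) (hf : HasDerivAt f f' x₀) (h0 : f x₀ = 0) (hneg : f' < 0)
    (b : ℝ) (hb : x₀ < b) : ∃ x, x₀ < x ∧ x < b ∧ f x < 0 := by
  have h1 := (hasDerivAt_iff_tendsto_slope.1 hf).mono_left
    (nhdsWithin_mono x₀ (fun y hy => ne_of_gt hy : Set.Ioi x₀ ⊆ {x₀}ᶜ))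
  have h2 := h1.eventually (gt_mem_nhds hneg)
  have h3 : ∀ᶠ x in nhdsWithin x₀ (Set.Ioi x₀), x ∈ Set.Ioo x₀ b := Ioo_mem_nhdsGT hb
  obtain ⟨x, hx, hx'⟩ := (h2.and h3).exists
  refine ⟨x, hx'.1, hx'.2, ?_⟩
  rw [slope_def_field, h0, sub_zero] at hx
  have : 0 < x - x₀ := sub_pos.2 hx'.1
  by_contra hcon
  exact absurd hx (not_lt.2 (div_nonneg (not_lt.1 hcon) this.le))

lemma exists_min (k r : ℕ) (hr : 3 ≤ r) (hrk : r ≤ k) (μ : ℝ) (hμ0 : 0 < μ)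
    (τstar : ℝ) (hτs0 : 0 < τstar) (hτs1 : τstar < 1 / ((r : ℝ) - 2))
    (hτseq : μ = ((k.choose r : ℝ))⁻¹ * (τstar / ((r : ℝ) * (1 + τstar) ^ (r - 1))))
    (τ : ℝ) (hτ : τstar < τ) :
    ∃ lam > (0 : ℝ), ∃ τ' : ℝ, 0 < τ' ∧ τ' ≤ τ ∧ phiE k r μ lam τ' < 0 ∧
      phiE k r μ lam τ' ≤ sInf {v : ℝ | ∃ lam > (0 : ℝ), ∃ τ' ∈ Set.Ioo (0 : ℝ) τ,
                v = phiE k r μ lam τ'} := by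
  have hr3 : (3 : ℝ) ≤ r := by exact_mod_cast hr
  have hrk' : (r : ℝ) ≤ k := by exact_mod_cast hrk
  have hch : (0 : ℝ) < k.choose r := by exact_mod_cast Nat.choose_pos hrk
  have hch1 : (1 : ℝ) ≤ k.choose (r-1) := by
    exact_mod_cast Nat.choose_pos (by omega : r - 1 ≤ k)
  have hid : (k.choose (r-1) : ℝ) * ((k : ℝ) - r + 1) = k.choose r * r := by
    have h := Nat.choose_succ_right_eq k (r-1)
    have h7 : ((k - (r-1) : ℕ) : ℝ) = (k : ℝ) - r + 1 := by
      rw [Nat.cast_sub (by omega), Nat.cast_sub (by omega)]; push_cast; ring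
    rw [← h7]
    rw [Nat.sub_add_cancel (by omega)] at h
    exact_mod_cast h.symm
  set A : ℝ := μ * (k.choose r * r) with hA
  have hAstar : A * (1 + τstar) ^ (r-1) = τstar := by
    have : (1 + τstar) ^ (r-1) ≠ 0 := by positivity
    rw [hA, hτseq]; field_simp
  -- find good τ1
  obtain ⟨τ1, h1, h2, h3⟩ : ∃ x, τstar < x ∧ x < τ ∧ A * (1 + x) ^ (r-1) - x < 0 := by
    apply neg_near (fun x => A * (1 + x) ^ (r-1) - x)
      (A * (((r-1 : ℕ) : ℝ) * (1 + τstar) ^ (r-1-1) * 1) - 1) τstar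
    · exact ((((hasDerivAt_id τstar).const_add 1).pow (r-1)).const_mul A).sub (hasDerivAt_id τstar)
    · linarith
    · have e : (1 + τstar) ^ (r-1) = (1 + τstar) ^ (r-1-1) * (1 + τstar) := by
        rw [← pow_succ]; congr 1; omega
      rw [e] at hAstar
      have hc : ((r-1 : ℕ) : ℝ) = r - 1 := by rw [Nat.cast_sub (by omega)]; simp
      rw [hc]
      rw [lt_div_iff₀ (by linarith)] at hτs1
      have : (A * (((r:ℝ)-1) * (1 + τstar) ^ (r-1-1) * 1)) * (1 + τstar) < 1 * (1 + τstar) := by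
        calc _ = ((r:ℝ)-1) * (A * ((1 + τstar) ^ (r-1-1) * (1 + τstar))) := by ring
          _ = ((r:ℝ)-1) * τstar := by rw [hAstar]
          _ < _ := by linarith
      have := lt_of_mul_lt_mul_right this (by linarith)
      linarith
    · exact hτ
  obtain ⟨lam1, hl0, -, hneg⟩ : ∃ x, (0:ℝ) < x ∧ x < 1 ∧ phiE k r μ x τ1 < 0 := by
    apply neg_near (fun x => phiE k r μ x τ1) (A * (1 + τ1) ^ (r-1) - τ1) 0
    · have h := ((((((hasDerivAt_id (0:ℝ)).const_mul ((k : ℝ) - r + 1)).exp).sub_const 1).const_mul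
        μ).mul_const (k.choose (r-1) : ℝ)).mul_const ((1 + τ1) ^ (r-1))
      have h' := h.sub ((hasDerivAt_id (0:ℝ)).mul_const τ1)
      refine HasDerivAt.congr_deriv (f := fun x => phiE k r μ x τ1) h' ?_
      simp only [id, mul_zero, Real.exp_zero, mul_one, one_mul]
      rw [hA, ← hid]; ring
    · simp [phiE]
    · exact h3
    · norm_num
  have hτpos : 0 < τ := by linarith
  have hbig : ∀ lam τ' : ℝ, 2 * τ / μ < lam → 0 ≤ τ' → τ' ≤ τ → 0 ≤ phiE k r μ lam τ' := by
    intro lam τ' hlam h0 hτ'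
    have hlp : 0 < lam := lt_trans (by positivity) hlam
    unfold phiE
    rw [div_lt_iff₀ hμ0] at hlam
    have e1 : lam + lam ^ 2 / 2 ≤ Real.exp (((k : ℝ) - r + 1) * lam) - 1 := by
      have a1 := Real.quadratic_le_exp_of_nonneg hlp.le
      have a2 : Real.exp lam ≤ Real.exp (((k : ℝ) - r + 1) * lam) :=
        Real.exp_le_exp.2 (by nlinarith)
      linarith
    have e2 : 0 ≤ lam + lam ^ 2 / 2 := by positivity
    have e3 : (1 : ℝ) ≤ (1 + τ') ^ (r-1) := one_le_pow₀ (by linarith)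
    have e4 : μ * (lam + lam ^ 2 / 2) ≤ μ * (Real.exp (((k : ℝ) - r + 1) * lam) - 1) :=
      mul_le_mul_of_nonneg_left e1 hμ0.le
    have e5 : 0 ≤ μ * (Real.exp (((k : ℝ) - r + 1) * lam) - 1) := by
      have := mul_nonneg hμ0.le e2; linarith
    have e6 : μ * (Real.exp (((k : ℝ) - r + 1) * lam) - 1) ≤
        μ * (Real.exp (((k : ℝ) - r + 1) * lam) - 1) * (k.choose (r-1) : ℝ) :=
      le_mul_of_one_le_right e5 hch1
    have e7 := le_mul_of_one_le_right (e5.trans e6) e3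
    have e8 : lam * τ' ≤ lam * τ := mul_le_mul_of_nonneg_left hτ' hlp.le
    have e9 : lam * (2 * τ) ≤ lam * (lam * μ) := mul_le_mul_of_nonneg_left hlam.le hlp.le
    have e10 : 0 < μ * lam := by positivity
    nlinarith
  have hcont : Continuous (fun p : ℝ × ℝ => phiE k r μ p.1 p.2) := by
    unfold phiE; fun_prop
  have hcomp : IsCompact (Set.Icc (0:ℝ) (2 * τ / μ) ×ˢ Set.Icc (0:ℝ) τ) :=
    isCompact_Icc.prod isCompact_Icc
  have hl1 : lam1 ≤ 2 * τ / μ := by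
    by_contra hc
    have := hbig lam1 τ1 (not_le.1 hc) (by linarith) h2.le
    linarith
  have hmem : (lam1, τ1) ∈ Set.Icc (0:ℝ) (2 * τ / μ) ×ˢ Set.Icc (0:ℝ) τ :=
    ⟨⟨hl0.le, hl1⟩, ⟨by linarith, h2.le⟩⟩
  obtain ⟨⟨l, t⟩, hlt, hmin⟩ := hcomp.exists_isMinOn ⟨_, hmem⟩ hcont.continuousOn
  have hm1 : phiE k r μ l t < 0 := lt_of_le_of_lt (hmin hmem) hneg
  obtain ⟨⟨hla, hlb⟩, ⟨hta, htb⟩⟩ := hlt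
  simp only at hla hlb hta htb
  refine ⟨l, ?_, t, ?_, htb, hm1, ?_⟩
  · rcases hla.lt_or_eq with h | h
    · exact h
    · rw [← h] at hm1; simp [phiE] at hm1
  · rcases hta.lt_or_eq with h | h
    · exact h
    · exfalso
      rw [← h] at hm1
      unfold phiE at hm1
      have e : 0 ≤ Real.exp (((k : ℝ) - r + 1) * l) - 1 := by
        have := Real.one_le_exp (mul_nonneg (by linarith : (0:ℝ) ≤ (k : ℝ) - r + 1) hla)
        linarith
      have : 0 ≤ μ * (Real.exp (((k : ℝ) - r + 1) * l) - 1) * (k.choose (r-1) : ℝ)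
        * (1 + 0) ^ (r-1) := by positivity
      linarith
  · refine le_csInf ?_ ?_
    · exact ⟨phiE k r μ lam1 τ1, lam1, hl0, τ1, ⟨by linarith, h2⟩, rfl⟩
    rintro v ⟨l', hl', t', ⟨ht0, ht1⟩, rfl⟩
    by_cases hc : l' ≤ 2 * τ / μ
    · have := hmin (show (l', t') ∈ Set.Icc (0:ℝ) (2 * τ / μ) ×ˢ Set.Icc (0:ℝ) τ from
        ⟨⟨hl'.le, hc⟩, ⟨ht0.le, ht1.le⟩⟩)
      exact this
    · have := hbig l' t' (not_le.1 hc) ht0.le ht1.le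
      linarith

lemma main_bound (k r : ℕ) (hr : 3 ≤ r) (hrk : r ≤ k)
    (u : ℕ → ℕ) (hu : UGood u) (μ : ℝ) (hμ0 : 0 < μ) (τ : ℝ)
    (m : ℕ → ℕ) (hm : ∀ n, m n = ⌈μ * (n : ℝ) ^ (r - 1) / (u n : ℝ) ^ (r - 2)⌉₊)
    (lam τ' : ℝ) (hlam : 0 < lam) (hτ' : 0 < τ') (hτ'τ : τ' ≤ τ) :
    ∃ C : ℝ, 0 ≤ C ∧ ∀ᶠ n in atTop,
      1 - Real.exp (phiE k r μ lam τ' * u n + C) ≤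
        prG n (m n) k (fun ω : Fin (m n) → (Fin k ↪ Fin n) =>
          ∃ V : Finset (Fin n), (∀ i ∈ V, u n ≤ (i : ℕ)) ∧
            (n : ℝ) - (1 + τ) * u n < (V.card : ℝ) ∧ IsStoppingSet (k - r + 2) ω V) := by
  have hrk' : (r : ℝ) ≤ k := by exact_mod_cast hrk
  set W : ℝ := (Real.exp (((k : ℝ) - r + 1) * lam) - 1) * (k.choose (r-1) : ℝ) with hW
  have hW0 : 0 ≤ W := by
    have := Real.one_le_exp (mul_nonneg (by linarith : (0:ℝ) ≤ (k : ℝ) - r + 1) hlam.le)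
    exact mul_nonneg (by linarith) (by positivity)
  set K : ℝ := μ * (1 + τ') ^ (r-1) * (2 ^ (r-1) - 1) + 1 with hK
  have h2 : (1:ℝ) ≤ 2 ^ (r-1) := one_le_pow₀ (by norm_num)
  have hK0 : 0 ≤ K := by
    have : 0 ≤ μ * (1 + τ') ^ (r-1) * (2 ^ (r-1) - 1) :=
      mul_nonneg (by positivity) (by linarith)
    linarith
  refine ⟨W * K, mul_nonneg hW0 hK0, ?_⟩
  have ev1 : ∀ᶠ n in atTop, (1:ℝ) ≤ u n := hu.1.eventually_ge_atTop 1
  have ev2 : ∀ᶠ n : ℕ in atTop, (u n : ℝ) / n < 1 / (1 + τ') :=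
    hu.2.eventually (gt_mem_nhds (by positivity))
  filter_upwards [ev1, ev2, eventually_ge_atTop k] with n hu1 hun hkn
  have hnpos : (0 : ℝ) < n := by
    have : 0 < n := by omega
    exact_mod_cast this
  rw [div_lt_div_iff₀ hnpos (by positivity), one_mul] at hun
  set t := ⌈(1 + τ') * (u n : ℝ)⌉₊ with ht
  have htn : t ≤ n := Nat.ceil_le.2 (by linarith)
  have ht1 : (1 + τ') * (u n : ℝ) ≤ t := Nat.le_ceil _
  have hut : u n ≤ t := by
    have : (u n : ℝ) ≤ t := by nlinarith
    exact_mod_cast this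
  have ht2 : (t : ℝ) < (1 + τ') * u n + 1 := Nat.ceil_lt_add_one (by positivity)
  have hmain := main_prob (m := m n) hr hrk hkn hut htn lam hlam
    (fun ω : Fin (m n) → (Fin k ↪ Fin n) =>
          ∃ V : Finset (Fin n), (∀ i ∈ V, u n ≤ (i : ℕ)) ∧
            (n : ℝ) - (1 + τ) * u n < (V.card : ℝ) ∧ IsStoppingSet (k - r + 2) ω V) (by
      rintro ω ⟨V, hV1, hV2, hV3⟩
      refine ⟨V, hV1, ?_, hV3⟩
      have h5 : V.card ≤ n := by simpa using Finset.card_le_univ V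
      have h3 : n - V.card < t := by omega
      have h4 := Nat.lt_ceil.1 h3
      rw [Nat.cast_sub h5] at h4
      nlinarith)
  refine le_trans ?_ hmain
  apply sub_le_sub_left
  apply Real.exp_le_exp.2
  -- main estimate
  clear hmain
  clear_value W K
  obtain ⟨p, ep, ep2⟩ : ∃ p, r - 1 = p + 1 ∧ r - 2 = p := ⟨r - 2, by omega, rfl⟩
  have hmn := hm n
  rw [ep] at hmn hW hK ⊢
  rw [ep2] at hmn
  have hup : (0:ℝ) < u n := by linarith
  have hmle : (m n : ℝ) ≤ μ * (n:ℝ) ^ (p+1) / (u n : ℝ) ^ p + 1 := by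
    rw [hmn]; exact (Nat.ceil_lt_add_one (by positivity)).le
  have htle : (t : ℝ) ≤ (1 + τ') * (u n + 1) := by linarith
  have hx : (m n : ℝ) * ((t : ℝ) / n) ^ (p+1) ≤ μ * (1 + τ') ^ (p+1) * u n + K := by
    have s1 : ((t : ℝ) / n) ^ (p+1) ≤ 1 := by
      apply pow_le_one₀ (by positivity)
      rw [div_le_one hnpos]; exact_mod_cast htn
    have s2 : (t : ℝ) ^ (p+1) ≤ (1 + τ') ^ (p+1) *
        ((u n : ℝ) ^ (p + 1) + (2 ^ (p + 1) - 1) * (u n : ℝ) ^ p) := by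
      calc (t : ℝ) ^ (p+1) ≤ ((1 + τ') * (u n + 1)) ^ (p+1) :=
            pow_le_pow_left₀ (by positivity) htle _
        _ = (1 + τ') ^ (p+1) * (u n + 1 : ℝ) ^ (p+1) := mul_pow _ _ _
        _ ≤ _ := mul_le_mul_of_nonneg_left (pow_add_one_le _ hu1 p) (by positivity)
    calc (m n : ℝ) * ((t : ℝ) / n) ^ (p+1)
        ≤ (μ * (n:ℝ) ^ (p+1) / (u n : ℝ) ^ p + 1) * ((t : ℝ) / n) ^ (p+1) :=
          mul_le_mul_of_nonneg_right hmle (by positivity)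
      _ = μ * (t : ℝ) ^ (p+1) / (u n : ℝ) ^ p + ((t : ℝ) / n) ^ (p+1) := by
          rw [div_pow]; field_simp
      _ ≤ μ * ((1 + τ') ^ (p+1) *
        ((u n : ℝ) ^ (p + 1) + (2 ^ (p + 1) - 1) * (u n : ℝ) ^ p)) / (u n : ℝ) ^ p + 1 := by
          gcongr
      _ = _ := by
          rw [hK, pow_succ (u n : ℝ) p]; field_simp; ring
  have hy := mul_le_mul_of_nonneg_left hx hW0
  have hz : lam * (τ' * u n) ≤ lam * ((t : ℝ) - u n) :=
    mul_le_mul_of_nonneg_left (by linarith) hlam.le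
  unfold phiE
  rw [ep]
  calc _ = -(lam * ((t : ℝ) - u n)) + W * ((m n : ℝ) * ((t : ℝ) / n) ^ (p+1)) := by
        rw [hW]; ring
    _ ≤ -(lam * (τ' * u n)) + W * (μ * (1 + τ') ^ (p+1) * u n + K) := by linarith
    _ = _ := by rw [hW]; ring

/-- Theorem `thm:ML`: for `m = ⌈μ n^{r-1}/u(n)^{r-2}⌉` with
`0 < μ < μ_c(k,r)`, `τ*` the unique solution in `(0,1/(r-2))` of
`μ = binom(k,r)⁻¹ τ*/(r(1+τ*)^{r-1})`, and any `τ > τ*`, the probability that there is a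
`(k-r+2)`-stopping set of size larger than `n - (1+τ)u(n)` inside `{u(n)+1,…,n}` is at
least `1 - exp((inf_{λ>0, τ'∈(0,τ)} φ_{k,r}(μ,λ,τ')) u(n) + C max{1, u(n)²/n})`; in
particular it tends to `1` exponentially fast in `u(n)`. -/
theorem stmt11 (k r : ℕ) (hr : 3 ≤ r) (hrk : r ≤ k)
    (u : ℕ → ℕ) (hu : UGood u)
    (μ : ℝ) (hμ0 : 0 < μ) (hμ : μ < muc k r)
    (τstar : ℝ) (hτs0 : 0 < τstar) (hτs1 : τstar < 1 / ((r : ℝ) - 2))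
    (hτseq : μ = ((k.choose r : ℝ))⁻¹ * (τstar / ((r : ℝ) * (1 + τstar) ^ (r - 1))))
    (τ : ℝ) (hτ : τstar < τ)
    (m : ℕ → ℕ) (hm : ∀ n, m n = ⌈μ * (n : ℝ) ^ (r - 1) / (u n : ℝ) ^ (r - 2)⌉₊) :
    (∃ C : ℝ, ∀ᶠ n in atTop,
      1 - Real.exp
            ((sInf {v : ℝ | ∃ lam > (0 : ℝ), ∃ τ' ∈ Set.Ioo (0 : ℝ) τ,
                v = phiE k r μ lam τ'}) * u n
              + C * max 1 ((u n : ℝ) ^ 2 / n)) ≤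
        prG n (m n) k (fun ω : Fin (m n) → (Fin k ↪ Fin n) =>
          ∃ V : Finset (Fin n), (∀ i ∈ V, u n ≤ (i : ℕ)) ∧
            (n : ℝ) - (1 + τ) * u n < (V.card : ℝ) ∧ IsStoppingSet (k - r + 2) ω V)) ∧
    (∃ c > (0 : ℝ), ∀ᶠ n in atTop,
      1 - Real.exp (-c * u n) ≤
        prG n (m n) k (fun ω : Fin (m n) → (Fin k ↪ Fin n) =>
          ∃ V : Finset (Fin n), (∀ i ∈ V, u n ≤ (i : ℕ)) ∧
            (n : ℝ) - (1 + τ) * u n < (V.card : ℝ) ∧ IsStoppingSet (k - r + 2) ω V)) := by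
  obtain ⟨lam, hlam, τ', hτ0, hτ1, hneg, hinf⟩ :=
    exists_min k r hr hrk μ hμ0 τstar hτs0 hτs1 hτseq τ hτ
  obtain ⟨C, hC0, hC⟩ := main_bound k r hr hrk u hu μ hμ0 τ m hm lam τ' hlam hτ0 hτ1
  constructor
  · refine ⟨C, ?_⟩
    filter_upwards [hC] with n hn
    refine le_trans ?_ hn
    apply sub_le_sub_left
    apply Real.exp_le_exp.2
    have h1 := mul_le_mul_of_nonneg_right hinf (Nat.cast_nonneg (α := ℝ) (u n))
    have h2 := mul_le_mul_of_nonneg_left (le_max_left 1 ((u n : ℝ) ^ 2 / n)) hC0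
    linarith
  · refine ⟨-phiE k r μ lam τ' / 2, by linarith, ?_⟩
    filter_upwards [hC, hu.1.eventually_ge_atTop (C / (-phiE k r μ lam τ' / 2))] with n hn hun
    refine le_trans ?_ hn
    apply sub_le_sub_left
    apply Real.exp_le_exp.2
    rw [div_le_iff₀ (by linarith)] at hun
    linarith
end
end
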